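/- arXiv:1611.06112 — 2 statements merged into one kernel-verified Lean document; each statement's English description precedes it below -/
import Mathlib

section
/- Let 0 < r ≤ 1 ≤ R, let λ be one of the four phases λ_{ε₁,ε₂}, and for τ > 0 and x ∈ ℝ³ define the kernel K_λ(τ, x) = ∫_{ℝ³} e^{τ λ(ξ) + i x·ξ} Ψ_{r,R}(ξ) dξ. Then there exists a constant C > 0, depending only on γ̄ and ψ, such that for every τ > 0 one has sup_{x ∈ ℝ³} |K_λ(τ, x)| ≤ C R³ r^{−2} τ^{−1/2}. -/
/- Common setup: the space ℝ³ (as a Euclidean space), Fourier transform,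
   partial derivatives, Sobolev-type norms. -/

noncomputable section

open MeasureTheory Real Complex Filter ENNReal

/-- The space `ℝ³`. -/
abbrev E3 : Type := EuclideanSpace ℝ (Fin 3)

/-- Fourier transform on `ℝ³`. -/
def FT (f : E3 → ℂ) : E3 → ℂ := FourierTransform.fourier f

/-- Inverse Fourier transform on `ℝ³`. -/
def FTinv (f : E3 → ℂ) : E3 → ℂ := FourierTransformInv.fourierInv f

/-- The point `(x₁, x₂, x₃) ∈ ℝ³`. -/
def pt (x1 x2 x3 : ℝ) : E3 := (EuclideanSpace.equiv (Fin 3) ℝ).symm ![x1, x2, x3]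

/-- Fourier transform of a real-valued function. -/
def FTr (f : E3 → ℝ) : E3 → ℂ := FT (fun x => (f x : ℂ))

/-- Partial derivative `∂ᵢ` of a real-valued function. -/
def pd (i : Fin 3) (f : E3 → ℝ) (x : E3) : ℝ := fderiv ℝ f x (EuclideanSpace.single i 1)

/-- Partial derivative `∂ᵢ` of a complex-valued function. -/
def pdC (i : Fin 3) (f : E3 → ℂ) (x : E3) : ℂ := fderiv ℝ f x (EuclideanSpace.single i 1)

/-- A smooth cut-off function `ψ` with values in `[0,1]`, equal to `1` on `(-∞,1]`
and to `0` on `[2,∞)`. -/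
def IsCutoff (ψ : ℝ → ℝ) : Prop :=
  ContDiff ℝ (⊤ : ℕ∞) ψ ∧ (∀ x, ψ x ∈ Set.Icc (0:ℝ) 1) ∧ (∀ x ≤ (1:ℝ), ψ x = 1) ∧
    (∀ x, (2:ℝ) ≤ x → ψ x = 0)

/-- The norm `|ξ_h|` of the horizontal component of a frequency `ξ`. -/
def xih (ξ : E3) : ℝ := Real.sqrt (ξ 0 ^ 2 + ξ 1 ^ 2)

/-- The frequency cut-off function `Ψ_{r,R}`. -/
def Psi (ψ : ℝ → ℝ) (r R : ℝ) (ξ : E3) : ℝ :=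
  ψ (‖ξ‖ / R) * ((1 - ψ (xih ξ / r)) * (1 - ψ (|ξ 2| / r)))

/-- The set `C_{r,R} = {ξ : |ξ| ≤ R, |ξ_h| ≥ r, |ξ₃| ≥ r}`. -/
def CrR (r R : ℝ) : Set E3 := {ξ | ‖ξ‖ ≤ R ∧ r ≤ xih ξ ∧ r ≤ |ξ 2|}

/-- The frequency cut-off operator `Ψ_{r,R}(D) g = 𝓕⁻¹(Ψ_{r,R} ĝ)`. -/
def PsiD (ψ : ℝ → ℝ) (r R : ℝ) (g : E3 → ℂ) : E3 → ℂ :=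
  FTinv (fun ξ => (Psi ψ r R ξ : ℂ) * FT g ξ)

/-- The eigenvalues `λ_{ε₁,ε₂}(ξ)` of `B̂(ξ)`. -/
def lamEV (γ ε1 ε2 : ℝ) (ξ : E3) : ℂ :=
  (ε1 : ℂ) * (Complex.I / 2) *
    (((Real.sqrt (1 + γ ^ 2 * ‖ξ‖ ^ 2 + 2 * γ * ξ 2) +
      ε2 * Real.sqrt (1 + γ ^ 2 * ‖ξ‖ ^ 2 - 2 * γ * ξ 2)) : ℝ) : ℂ)

/-- The oscillatory kernel `K_λ(τ,x) = ∫ e^{τλ(ξ) + i x·ξ} Ψ_{r,R}(ξ) dξ`. -/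
def Kker (ψ : ℝ → ℝ) (r R γ ε1 ε2 τ : ℝ) (x : E3) : ℂ :=
  ∫ ξ : E3, Complex.exp ((τ : ℂ) * lamEV γ ε1 ε2 ξ +
      Complex.I * ((inner ℝ x ξ : ℝ) : ℂ)) * ((Psi ψ r R ξ : ℝ) : ℂ)

/-! Substitute `ξ_h = (1 + |ξ₃| / R) η` and integrate in `t = ξ₃` first, along the ray with `η`
fixed. There each square root in `λ` is `√q` for a quadratic `q = α t² + 2 β t + c`, with second
derivative `(α c - β²) / √q ³`, that is, `γ² |η|² (γ ∓ 1 / R)² / √q ³` for `t > 0`. The slope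
`1 / R` of the ray gives the smaller root the larger numerator, so for every choice of signs the
second derivative of the phase is at least a multiple of `|η|² / R⁴` in absolute value. The van der
Corput lemma bounds the integral over the ray by a multiple of `R² / (|η| √τ)`, whatever the linear
part `x · ξ` of the phase, and the singularity `1 / |η|` is integrable in the plane. The cut-offs
cost only their total variation, so that the bound does not depend on `r`. -/

/-! ### Oscillatory integrals in one variable -/

section Oscillatory

open Set intervalIntegral

variable {a b : ℝ}

lemma hasDerivAt_integral_of_continuousOn_Icc {f : ℝ → ℂ} (hf : ContinuousOn f (Icc a b)) {t : ℝ}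
    (ht : t ∈ Ioo a b) : HasDerivAt (fun x => ∫ y in a..x, f y) (f t) t := by
  have hnhds : Icc a b ∈ nhds t := Icc_mem_nhds ht.1 ht.2
  exact integral_hasDerivAt_right
    ((hf.mono (Icc_subset_Icc_right ht.2.le)).intervalIntegrable_of_Icc ht.1.le)
    ((hf.stronglyMeasurableAtFilter_nhdsWithin measurableSet_Icc t).filter_mono
      (nhdsWithin_eq_nhds.2 hnhds).ge)
    (hf.continuousAt hnhds)

/-- The integrals of `f` over all initial segments `[a, s]` of `[a, b]` are bounded by `B`. This is
the form in which bounds for oscillatory integrals are transferred from a pure oscillation to its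
product with an amplitude. -/
structure HasInitialIntegralsLE (f : ℝ → ℂ) (a b B : ℝ) : Prop where
  continuousOn : ContinuousOn f (Icc a b)
  norm_integral_le : ∀ s ∈ Icc a b, ‖∫ t in a..s, f t‖ ≤ B

namespace HasInitialIntegralsLE

variable {f : ℝ → ℂ} {B : ℝ}

lemma congr {g : ℝ → ℂ} (h : HasInitialIntegralsLE f a b B) (hfg : EqOn g f (Icc a b)) :
    HasInitialIntegralsLE g a b B := by
  refine ⟨h.1.congr hfg, fun s hs => ?_⟩
  rw [integral_congr fun t ht => hfg ((uIcc_of_le hs.1 ▸ Icc_subset_Icc_right hs.2) ht)]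
  exact h.2 s hs

lemma mul_ofReal {k k' : ℝ → ℝ} {K V : ℝ} (h : HasInitialIntegralsLE f a b B)
    (hk : ∀ t ∈ Icc a b, HasDerivAt k (k' t) t) (hk' : ContinuousOn k' (Icc a b))
    (hK : ∀ t ∈ Icc a b, |k t| ≤ K) (hV : ∀ s ∈ Icc a b, ∫ t in a..s, |k' t| ≤ V) :
    HasInitialIntegralsLE (fun t => f t * k t) a b (B * (K + V)) := by
  refine ⟨h.1.mul (continuous_ofReal.comp_continuousOn fun t ht =>
    (hk t ht).continuousAt.continuousWithinAt), fun s hs => ?_⟩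
  obtain ⟨hf, hB⟩ := h
  have hsub : uIcc a s ⊆ Icc a b := uIcc_of_le hs.1 ▸ Icc_subset_Icc_right hs.2
  have hsub' : Ioo (min a s) (max a s) ⊆ Ioo a b := by
    rw [min_eq_left hs.1, max_eq_right hs.1]
    exact Ioo_subset_Ioo_right hs.2
  have hfi : IntervalIntegrable f volume a s := (hf.mono hsub).intervalIntegrable
  have hki : IntervalIntegrable k' volume a s := (hk'.mono hsub).intervalIntegrable
  have parts := integral_mul_deriv_eq_deriv_mul_of_hasDeriv_right (u := fun t => (k t : ℂ))
    (u' := fun t => (k' t : ℂ))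
    (fun t ht => (hk t (hsub ht)).ofReal_comp.continuousAt.continuousWithinAt)
    (continuousOn_primitive_interval' hfi left_mem_uIcc)
    (fun t ht => (hk t (Ioo_subset_Icc_self (hsub' ht))).ofReal_comp.hasDerivWithinAt)
    (fun t ht => (hasDerivAt_integral_of_continuousOn_Icc hf (hsub' ht)).hasDerivWithinAt)
    ⟨hki.1.ofReal, hki.2.ofReal⟩ hfi
  have boundary : ‖(k s : ℂ) * ∫ t in a..s, f t‖ ≤ B * K := by
    rw [norm_mul, Complex.norm_real, mul_comm]
    exact mul_le_mul (hB s hs) (hK s hs) (norm_nonneg _) ((norm_nonneg _).trans (hB s hs))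
  have interior : ‖∫ x in a..s, (k' x : ℂ) * ∫ t in a..x, f t‖ ≤ B * V := by
    refine (norm_integral_le_of_norm_le hs.1 (g := fun x => B * |k' x|) ?_
      (hki.abs.const_mul B)).trans ?_
    · refine .of_forall fun x hx => ?_
      rw [norm_mul, Complex.norm_real, mul_comm]
      exact mul_le_mul_of_nonneg_right (hB x ⟨hx.1.le, hx.2.trans hs.2⟩) (abs_nonneg _)
    · rw [intervalIntegral.integral_const_mul]
      exact mul_le_mul_of_nonneg_left (hV s hs) ((norm_nonneg _).trans (hB s hs))
  simp_rw [mul_comm (f _)]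
  rw [parts, integral_same, mul_zero, sub_zero, mul_add]
  exact (norm_sub_le _ _).trans (add_le_add boundary interior)

lemma mul_ofReal_of_deriv_nonneg {k k' : ℝ → ℝ} {K : ℝ} (h : HasInitialIntegralsLE f a b B)
    (hk : ∀ t ∈ Icc a b, HasDerivAt k (k' t) t) (hk' : ContinuousOn k' (Icc a b))
    (hk'0 : ∀ t ∈ Icc a b, 0 ≤ k' t) (hK : ∀ t ∈ Icc a b, |k t| ≤ K) :
    HasInitialIntegralsLE (fun t => f t * k t) a b (3 * K * B) := by
  rw [show 3 * K * B = B * (K + 2 * K) by ring]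
  refine h.mul_ofReal hk hk' hK fun s hs => ?_
  have hsub : uIcc a s ⊆ Icc a b := uIcc_of_le hs.1 ▸ Icc_subset_Icc_right hs.2
  rw [integral_congr fun t ht => abs_of_nonneg (hk'0 t (hsub ht)),
    integral_eq_sub_of_hasDerivAt (fun t ht => hk t (hsub ht)) (hk'.mono hsub).intervalIntegrable]
  linarith [(abs_le.1 (hK s hs)).2, (abs_le.1 (hK a ⟨le_rfl, hs.1.trans hs.2⟩)).1]

lemma mul_comp {χ m m' : ℝ → ℝ} (h : HasInitialIntegralsLE f a b B)
    (hχ : ContDiff ℝ 1 χ) (hχ' : Integrable (deriv χ)) (hχ1 : ∀ x, |χ x| ≤ 1)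
    (hm : ∀ t ∈ Icc a b, HasDerivAt m (m' t) t) (hm' : ContinuousOn m' (Icc a b))
    (hm'0 : ∀ t ∈ Icc a b, 0 ≤ m' t) :
    HasInitialIntegralsLE (fun t => f t * χ (m t)) a b (B * (1 + ∫ x, |deriv χ x|)) := by
  have hdχ : Continuous (deriv χ) := hχ.continuous_deriv le_rfl
  refine h.mul_ofReal (k' := fun t => deriv χ (m t) * m' t)
    (fun t ht => ((hχ.differentiable one_ne_zero (m t)).hasDerivAt).comp t (hm t ht))
    ((hdχ.comp_continuousOn fun t ht => (hm t ht).continuousAt.continuousWithinAt).mul hm')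
    (fun t _ => hχ1 _) fun s hs => ?_
  have hsub : uIcc a s ⊆ Icc a b := uIcc_of_le hs.1 ▸ Icc_subset_Icc_right hs.2
  have hmono : MonotoneOn m (Icc a b) :=
    monotoneOn_of_deriv_nonneg (convex_Icc a b)
      (fun t ht => (hm t ht).continuousAt.continuousWithinAt)
      (fun t ht => (hm t (interior_subset ht)).differentiableAt.differentiableWithinAt)
      fun t ht => (hm t (interior_subset ht)).deriv ▸ hm'0 t (interior_subset ht)
  calc ∫ t in a..s, |deriv χ (m t) * m' t|
      = ∫ t in a..s, ((fun x => |deriv χ x|) ∘ m) t * m' t :=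
        integral_congr fun t ht => by
          simp only [Function.comp, abs_mul, abs_of_nonneg (hm'0 t (hsub ht))]
    _ = ∫ x in m a..m s, |deriv χ x| :=
        integral_comp_mul_deriv (fun t ht => hm t (hsub ht)) (hm'.mono hsub) hdχ.abs
    _ ≤ ∫ x, |deriv χ x| := by
        rw [integral_of_le (hmono (left_mem_Icc.2 (hs.1.trans hs.2)) hs hs.1)]
        exact setIntegral_le_integral hχ'.abs (.of_forall fun x => abs_nonneg _)

end HasInitialIntegralsLE

lemma norm_integral_cexp_le_of_abs_deriv_ge {φ φ' φ'' : ℝ → ℝ} {δ : ℝ} (hab : a ≤ b) (hδ : 0 < δ)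
    (hφ : ∀ t ∈ Icc a b, HasDerivAt φ (φ' t) t) (hφ' : ∀ t ∈ Icc a b, HasDerivAt φ' (φ'' t) t)
    (hφ'' : ContinuousOn φ'' (Icc a b)) (hφ''0 : ∀ t ∈ Icc a b, 0 ≤ φ'' t)
    (hφ'δ : ∀ t ∈ Icc a b, δ ≤ |φ' t|) : ‖∫ t in a..b, cexp (φ t * I)‖ ≤ 6 / δ := by
  have hne : ∀ t ∈ Icc a b, φ' t ≠ 0 := fun t ht => abs_pos.1 (hδ.trans_le (hφ'δ t ht))
  have hφc : ContinuousOn φ (Icc a b) := fun t ht => (hφ t ht).continuousAt.continuousWithinAt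
  have hφ'c : ContinuousOn φ' (Icc a b) := fun t ht => (hφ' t ht).continuousAt.continuousWithinAt
  have hf : ContinuousOn (fun t => cexp (φ t * I) * (φ' t * I)) (Icc a b) := by fun_prop
  have primitive : HasInitialIntegralsLE (fun t => cexp (φ t * I) * (φ' t * I)) a b 2 := by
    refine ⟨hf, fun s hs => ?_⟩
    have hsub : uIcc a s ⊆ Icc a b := uIcc_of_le hs.1 ▸ Icc_subset_Icc_right hs.2
    rw [integral_eq_sub_of_hasDerivAt
      (fun t ht => ((hφ t (hsub ht)).ofReal_comp.mul_const I).cexp)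
      (hf.mono hsub).intervalIntegrable]
    refine (norm_sub_le _ _).trans ?_
    rw [norm_exp_ofReal_mul_I, norm_exp_ofReal_mul_I]
    norm_num
  have weighted := (primitive.mul_ofReal_of_deriv_nonneg (k := fun t => -(φ' t)⁻¹) (K := δ⁻¹)
    (fun t ht => ((hφ' t ht).inv (hne t ht)).neg)
    (((hφ''.neg).div (hφ'c.pow 2) fun t ht => pow_ne_zero 2 (hne t ht)).neg)
    (fun t ht => by
      rw [neg_div, neg_neg]
      exact div_nonneg (hφ''0 t ht) (sq_nonneg _))
    (fun t ht => by
      rw [abs_neg, abs_inv]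
      exact inv_anti₀ hδ (hφ'δ t ht))).norm_integral_le b (right_mem_Icc.2 hab)
  have factor : ∫ t in a..b, cexp (φ t * I) * (φ' t * I) * (-(φ' t)⁻¹ : ℝ) =
      -I * ∫ t in a..b, cexp (φ t * I) := by
    rw [← intervalIntegral.integral_const_mul]
    refine integral_congr fun t ht => ?_
    have hc : (φ' t : ℂ) ≠ 0 := ofReal_ne_zero.2 (hne t (uIcc_of_le hab ▸ ht))
    push_cast
    field_simp
  rw [factor, norm_mul, norm_neg, norm_I, one_mul] at weighted
  linarith [show 3 * δ⁻¹ * 2 = 6 / δ by ring]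

lemma exists_mul_abs_sub_le_abs {g : ℝ → ℝ} {μ : ℝ} (hab : a ≤ b)
    (hg : ContinuousOn g (Icc a b))
    (hslope : ∀ x ∈ Icc a b, ∀ y ∈ Icc a b, x ≤ y → μ * (y - x) ≤ g y - g x) :
    ∃ c ∈ Icc a b, ∀ t ∈ Icc a b, μ * |t - c| ≤ |g t| := by
  obtain ⟨c, hc, hleft, hright⟩ : ∃ c ∈ Icc a b, (c ≠ a → g c ≤ 0) ∧ (c ≠ b → 0 ≤ g c) := by
    rcases le_total 0 (g a) with ha | ha
    · exact ⟨a, left_mem_Icc.2 hab, fun h => absurd rfl h, fun _ => ha⟩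
    rcases le_total (g b) 0 with hb | hb
    · exact ⟨b, right_mem_Icc.2 hab, fun _ => hb, fun h => absurd rfl h⟩
    obtain ⟨c, hc, hgc⟩ := intermediate_value_Icc hab hg ⟨ha, hb⟩
    exact ⟨c, hc, fun _ => hgc.le, fun _ => hgc.ge⟩
  refine ⟨c, hc, fun t ht => ?_⟩
  rcases lt_trichotomy t c with h | rfl | h
  · rw [abs_of_neg (sub_neg.2 h)]
    linarith [hslope t ht c hc h.le, hleft (ht.1.trans_lt h).ne', neg_abs_le (g t)]
  · simp
  · rw [abs_of_pos (sub_pos.2 h)]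
    linarith [hslope c hc t ht h.le, hright (h.trans_le ht.2).ne, le_abs_self (g t)]

lemma norm_integral_le_of_le_away {f : ℝ → ℂ} {c δ A : ℝ} (hc : c ∈ Icc a b) (hδ : 0 ≤ δ)
    (hA : 0 ≤ A) (hf : ContinuousOn f (Icc a b)) (hf1 : ∀ t, ‖f t‖ ≤ 1)
    (haway : ∀ x y, a ≤ x → x ≤ y → y ≤ b → (∀ t ∈ Icc x y, δ ≤ |t - c|) →
      ‖∫ t in x..y, f t‖ ≤ A) :
    ‖∫ t in a..b, f t‖ ≤ 2 * A + 2 * δ := by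
  set l := max a (c - δ)
  set u := min b (c + δ)
  have hal : a ≤ l := le_max_left _ _
  have hlc : l ≤ c := max_le hc.1 (by linarith)
  have hcu : c ≤ u := le_min hc.2 (by linarith)
  have hub : u ≤ b := min_le_left _ _
  have left : ‖∫ t in a..l, f t‖ ≤ A := by
    rcases hal.eq_or_lt with h | h
    · simpa only [← h, integral_same, norm_zero] using hA
    have hl : l = c - δ := max_eq_right (lt_max_iff.1 h |>.resolve_left (lt_irrefl a)).le
    exact haway a l le_rfl hal (hlc.trans hc.2) fun t ht => by
      linarith [ht.2, neg_abs_le (t - c)]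
  have right : ‖∫ t in u..b, f t‖ ≤ A := by
    rcases hub.eq_or_lt with h | h
    · simpa only [h, integral_same, norm_zero] using hA
    have hu : u = c + δ := min_eq_right (min_lt_iff.1 h |>.resolve_left (lt_irrefl b)).le
    exact haway u b (hc.1.trans hcu) hub le_rfl fun t ht => by
      linarith [ht.1, le_abs_self (t - c)]
  have middle : ‖∫ t in l..u, f t‖ ≤ 2 * δ := by
    refine (norm_integral_le_of_norm_le_const fun t _ => hf1 t).trans ?_
    rw [one_mul, abs_of_nonneg (by linarith)]
    linarith [le_max_right a (c - δ), min_le_right b (c + δ)]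
  have hint : ∀ x y, a ≤ x → x ≤ y → y ≤ b → IntervalIntegrable f volume x y :=
    fun x y hax hxy hyb => (hf.mono (Icc_subset_Icc hax hyb)).intervalIntegrable_of_Icc hxy
  rw [← integral_add_adjacent_intervals (hint a l le_rfl hal (by linarith))
      (hint l b hal (by linarith) le_rfl),
    ← integral_add_adjacent_intervals (hint l u hal (by linarith) hub)
      (hint u b (by linarith) hub le_rfl), ← add_assoc]
  exact norm_add₃_le.trans (by linarith)

lemma norm_integral_cexp_le_of_deriv2_ge {φ φ' φ'' : ℝ → ℝ} {μ : ℝ} (hab : a ≤ b) (hμ : 0 < μ)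
    (hφ : ∀ t ∈ Icc a b, HasDerivAt φ (φ' t) t) (hφ' : ∀ t ∈ Icc a b, HasDerivAt φ' (φ'' t) t)
    (hφ'' : ContinuousOn φ'' (Icc a b)) (hφ''μ : ∀ t ∈ Icc a b, μ ≤ φ'' t) :
    ‖∫ t in a..b, cexp (φ t * I)‖ ≤ 14 / √μ := by
  have hφc : ContinuousOn φ (Icc a b) := fun t ht => (hφ t ht).continuousAt.continuousWithinAt
  have hφ'c : ContinuousOn φ' (Icc a b) := fun t ht => (hφ' t ht).continuousAt.continuousWithinAt
  have hsμ : 0 < √μ := Real.sqrt_pos.2 hμ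
  obtain ⟨c, hc, hφ'ge⟩ := exists_mul_abs_sub_le_abs hab hφ'c fun x hx y hy hxy =>
    (convex_Icc a b).mul_sub_le_image_sub_of_le_deriv hφ'c
      (fun t ht => (hφ' t (interior_subset ht)).differentiableAt.differentiableWithinAt)
      (fun t ht => (hφ' t (interior_subset ht)).deriv ▸ hφ''μ t (interior_subset ht)) x hx y hy hxy
  have away : ∀ x y, a ≤ x → x ≤ y → y ≤ b → (∀ t ∈ Icc x y, 1 / √μ ≤ |t - c|) →
      ‖∫ t in x..y, cexp (φ t * I)‖ ≤ 6 / √μ := by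
    intro x y hax hxy hyb hfar
    have hsub : Icc x y ⊆ Icc a b := Icc_subset_Icc hax hyb
    refine norm_integral_cexp_le_of_abs_deriv_ge hxy hsμ (fun t ht => hφ t (hsub ht))
      (fun t ht => hφ' t (hsub ht)) (hφ''.mono hsub)
      (fun t ht => hμ.le.trans (hφ''μ t (hsub ht))) fun t ht => ?_
    calc √μ = μ * (1 / √μ) := by rw [mul_one_div, Real.div_sqrt]
      _ ≤ μ * |t - c| := by gcongr; exact hfar t ht
      _ ≤ |φ' t| := hφ'ge t (hsub ht)
  calc ‖∫ t in a..b, cexp (φ t * I)‖ ≤ 2 * (6 / √μ) + 2 * (1 / √μ) :=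
        norm_integral_le_of_le_away hc (by positivity) (by positivity) (by fun_prop)
          (fun t => (norm_exp_ofReal_mul_I _).le) away
    _ = 14 / √μ := by ring

lemma norm_integral_cexp_le_of_abs_deriv2_ge {φ φ' φ'' : ℝ → ℝ} {μ : ℝ} (hab : a ≤ b)
    (hμ : 0 < μ) (hφ : ∀ t ∈ Icc a b, HasDerivAt φ (φ' t) t)
    (hφ' : ∀ t ∈ Icc a b, HasDerivAt φ' (φ'' t) t) (hφ'' : ContinuousOn φ'' (Icc a b))
    (hφ''μ : ∀ t ∈ Icc a b, μ ≤ |φ'' t|) : ‖∫ t in a..b, cexp (φ t * I)‖ ≤ 14 / √μ := by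
  have hne : ∀ t ∈ Icc a b, φ'' t ≠ 0 := fun t ht => abs_pos.1 (hμ.trans_le (hφ''μ t ht))
  have hsign : (∀ t ∈ Icc a b, 0 < φ'' t) ∨ ∀ t ∈ Icc a b, φ'' t < 0 := by
    by_contra! h
    obtain ⟨⟨x, hx, hx0⟩, y, hy, hy0⟩ := h
    obtain ⟨z, hz, hz0⟩ := isPreconnected_Icc.intermediate_value hx hy hφ'' ⟨hx0, hy0⟩
    exact hne z hz hz0
  rcases hsign with hpos | hneg
  · exact norm_integral_cexp_le_of_deriv2_ge hab hμ hφ hφ' hφ''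
      fun t ht => abs_of_pos (hpos t ht) ▸ hφ''μ t ht
  · have hconj : ∫ t in a..b, cexp ((-φ t : ℝ) * I) =
        (starRingEnd ℂ) (∫ t in a..b, cexp (φ t * I)) := by
      rw [← intervalIntegral_conj]
      refine integral_congr fun t _ => ?_
      simp [← Complex.exp_conj]
    rw [← RCLike.norm_conj, ← hconj]
    exact norm_integral_cexp_le_of_deriv2_ge hab hμ (fun t ht => (hφ t ht).neg)
      (fun t ht => (hφ' t ht).neg) hφ''.neg fun t ht => abs_of_neg (hneg t ht) ▸ hφ''μ t ht

end Oscillatory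

/-! ### The phase along a conical ray -/

section Phase

open Set

lemma hasDerivAt_sqrt_quadratic {α β c t : ℝ} (h : 0 < α * t ^ 2 + 2 * β * t + c) :
    HasDerivAt (fun s => √(α * s ^ 2 + 2 * β * s + c))
      ((α * t + β) / √(α * t ^ 2 + 2 * β * t + c)) t := by
  have hq : HasDerivAt (fun s => α * s ^ 2 + 2 * β * s + c) (2 * (α * t + β)) t := by
    refine ((((hasDerivAt_pow 2 t).const_mul α).add
      ((hasDerivAt_id t).const_mul (2 * β))).add_const c).congr_deriv ?_
    push_cast
    ring
  exact (hq.sqrt h.ne').congr_deriv (mul_div_mul_left _ _ two_ne_zero)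

lemma hasDerivAt_deriv_sqrt_quadratic {α β c t : ℝ} (h : 0 < α * t ^ 2 + 2 * β * t + c) :
    HasDerivAt (fun s => (α * s + β) / √(α * s ^ 2 + 2 * β * s + c))
      ((α * c - β ^ 2) / √(α * t ^ 2 + 2 * β * t + c) ^ 3) t := by
  have hs := (Real.sqrt_pos.2 h).ne'
  have hlin : HasDerivAt (fun s => α * s + β) α t := by
    simpa only [mul_one, id_eq] using ((hasDerivAt_id t).const_mul α).add_const β
  refine (hlin.div (hasDerivAt_sqrt_quadratic h) hs).congr_deriv ?_
  have hsq := Real.sq_sqrt h.le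
  generalize √(α * t ^ 2 + 2 * β * t + c) = s at hs hsq
  field_simp
  linear_combination α * hsq

/-- The square root occurring in `lamEV`, as a function of `h = |ξ_h|` and `t = ξ₃`. The second
square root of `lamEV` is `sqrtBranch (-γ)`. -/
def sqrtBranch (γ h t : ℝ) : ℝ := √(1 + γ ^ 2 * (h ^ 2 + t ^ 2) + 2 * γ * t)

/-- The real phase `Im λ_{ε₁,ε₂}` as a function of `h = |ξ_h|` and `t = ξ₃`. -/
def lamPhase (γ ε₁ ε₂ h t : ℝ) : ℝ := ε₁ / 2 * (sqrtBranch γ h t + ε₂ * sqrtBranch (-γ) h t)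

variable {γ ε₁ ε₂ b ρ h t R τ : ℝ}

lemma sqrtBranch_pos (hγ : γ ≠ 0) (hh : h ≠ 0) : 0 < sqrtBranch γ h t := by
  refine Real.sqrt_pos.2 ?_
  have : 0 < (γ * h) ^ 2 := by positivity
  nlinarith [sq_nonneg (1 + γ * t)]

lemma sqrtBranch_neg_le (hγ : 0 ≤ γ) (ht : 0 ≤ t) : sqrtBranch (-γ) h t ≤ sqrtBranch γ h t :=
  Real.sqrt_le_sqrt (by nlinarith [mul_nonneg hγ ht])

lemma sqrtBranch_le (hγ : 0 ≤ γ) (hh : 0 ≤ h) (ht : 0 ≤ t) : sqrtBranch γ h t ≤ 1 + γ * (h + t) :=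
  Real.sqrt_le_iff.2 ⟨by positivity, by
    nlinarith [mul_nonneg hγ hh, mul_nonneg (sq_nonneg γ) (mul_nonneg hh ht)]⟩

lemma continuous_sqrtBranch : Continuous fun p : ℝ × ℝ => sqrtBranch γ p.1 p.2 := by
  unfold sqrtBranch
  fun_prop

lemma continuous_lamPhase : Continuous fun p : ℝ × ℝ => lamPhase γ ε₁ ε₂ p.1 p.2 :=
  continuous_const.mul (continuous_sqrtBranch.add (continuous_const.mul continuous_sqrtBranch))

lemma exists_hasDerivAt_sqrtBranch_cone (hγ : γ ≠ 0) (hb : 0 ≤ b) (hρ : 0 < ρ) :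
    ∃ f' : ℝ → ℝ, ∀ t, 0 ≤ t →
      HasDerivAt (fun s => sqrtBranch γ ((1 + b * s) * ρ) s) (f' t) t ∧
      HasDerivAt f' ((γ * ρ * (γ - b)) ^ 2 / sqrtBranch γ ((1 + b * t) * ρ) t ^ 3) t := by
  have expand : ∀ s, sqrtBranch γ ((1 + b * s) * ρ) s =
      √(γ ^ 2 * (1 + b ^ 2 * ρ ^ 2) * s ^ 2 + 2 * (γ ^ 2 * b * ρ ^ 2 + γ) * s +
        (1 + γ ^ 2 * ρ ^ 2)) := fun s => by
    rw [sqrtBranch]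
    ring_nf
  have hpos : ∀ s, 0 ≤ s → 0 < γ ^ 2 * (1 + b ^ 2 * ρ ^ 2) * s ^ 2 +
      2 * (γ ^ 2 * b * ρ ^ 2 + γ) * s + (1 + γ ^ 2 * ρ ^ 2) := fun s hs =>
    Real.sqrt_pos.1 (expand s ▸ sqrtBranch_pos hγ (by positivity))
  refine ⟨_, fun t ht => ⟨(hasDerivAt_sqrt_quadratic (hpos t ht)).congr_of_eventuallyEq
    (.of_forall expand), (hasDerivAt_deriv_sqrt_quadratic (hpos t ht)).congr_deriv ?_⟩⟩
  rw [expand]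
  ring

lemma le_div_cube_sub_div_cube {s s' A : ℝ} (hγ : 0 ≤ γ) (hb : 0 ≤ b) (hs' : 0 < s') (hs : s' ≤ s)
    (hA : s ≤ A) :
    4 * γ ^ 3 * b * ρ ^ 2 / A ^ 3 ≤
      (-γ * ρ * (-γ - b)) ^ 2 / s' ^ 3 - (γ * ρ * (γ - b)) ^ 2 / s ^ 3 := by
  have hs0 : 0 < s := hs'.trans_le hs
  calc 4 * γ ^ 3 * b * ρ ^ 2 / A ^ 3 ≤ 4 * γ ^ 3 * b * ρ ^ 2 / s ^ 3 := by gcongr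
    _ = (-γ * ρ * (-γ - b)) ^ 2 / s ^ 3 - (γ * ρ * (γ - b)) ^ 2 / s ^ 3 := by ring
    _ ≤ _ := by gcongr

lemma sub_le_abs_mul_add_mul {x y : ℝ} (hε₁ : |ε₁| = 1) (hε₂ : |ε₂| = 1) (hx : 0 ≤ x) :
    y - x ≤ |ε₁ * (x + ε₂ * y)| := by
  rw [abs_mul, hε₁, one_mul]
  calc y - x ≤ |ε₂ * y| - |-x| := by
        rw [abs_mul, hε₂, one_mul, abs_neg, abs_of_nonneg hx]
        gcongr
        exact le_abs_self y
    _ ≤ |ε₂ * y - -x| := abs_sub_abs_le_abs_sub _ _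
    _ = |x + ε₂ * y| := by rw [sub_neg_eq_add, add_comm]

lemma sqrtBranch_cone_le (hγ : 0 ≤ γ) (hR : 1 ≤ R) (hρ : 0 ≤ ρ) (hρR : ρ ≤ 2 * R)
    (ht : t ∈ Icc 0 (2 * R)) : sqrtBranch γ ((1 + R⁻¹ * t) * ρ) t ≤ (1 + 8 * γ) * R := by
  have hR0 : 0 < R := zero_lt_one.trans_le hR
  have hRt : R⁻¹ * t ≤ 2 := by
    rw [inv_mul_le_iff₀ hR0, mul_comm]
    exact ht.2
  have hRt0 : 0 ≤ R⁻¹ * t := mul_nonneg (inv_nonneg.2 hR0.le) ht.1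
  calc sqrtBranch γ ((1 + R⁻¹ * t) * ρ) t ≤ 1 + γ * ((1 + R⁻¹ * t) * ρ + t) :=
        sqrtBranch_le hγ (by positivity) ht.1
    _ ≤ R + γ * ((1 + 2) * (2 * R) + 2 * R) := by
        gcongr
        exact ht.2
    _ = (1 + 8 * γ) * R := by ring

lemma norm_integral_cexp_lamPhase_cone_le {p q : ℝ} (hγ : 0 < γ) (hε₁ : |ε₁| = 1) (hε₂ : |ε₂| = 1)
    (hR : 1 ≤ R) (hρ : 0 < ρ) (hρR : ρ ≤ 2 * R) (hτ : 0 < τ) {s : ℝ} (hs : s ∈ Icc 0 (2 * R)) :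
    ‖∫ t in (0 : ℝ)..s,
        cexp ((τ * lamPhase γ ε₁ ε₂ ((1 + R⁻¹ * t) * ρ) t + (p * t + q) : ℝ) * I)‖ ≤
      14 / √(τ / 2 * (4 * γ ^ 3 * R⁻¹ * ρ ^ 2 / ((1 + 8 * γ) * R) ^ 3)) := by
  have hR0 : 0 < R := zero_lt_one.trans_le hR
  have hb : 0 ≤ R⁻¹ := inv_nonneg.2 hR0.le
  have hpos : ∀ {g t : ℝ}, g ≠ 0 → 0 ≤ t → 0 < sqrtBranch g ((1 + R⁻¹ * t) * ρ) t :=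
    fun hg ht => sqrtBranch_pos hg (by positivity)
  obtain ⟨f₁, hf₁⟩ := exists_hasDerivAt_sqrtBranch_cone hγ.ne' hb hρ
  obtain ⟨f₂, hf₂⟩ := exists_hasDerivAt_sqrtBranch_cone (neg_ne_zero.2 hγ.ne') hb hρ
  have hcont : ∀ g : ℝ, g ≠ 0 → ContinuousOn (fun t => (g * ρ * (g - R⁻¹)) ^ 2 /
      sqrtBranch g ((1 + R⁻¹ * t) * ρ) t ^ 3) (Icc 0 s) := fun g hg =>
    continuousOn_const.div ((continuous_sqrtBranch.comp (by fun_prop :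
      Continuous fun t : ℝ => ((1 + R⁻¹ * t) * ρ, t))).continuousOn.pow 3)
      fun t ht => (pow_pos (hpos hg ht.1) 3).ne'
  refine norm_integral_cexp_le_of_abs_deriv2_ge hs.1 (by positivity)
    (fun t ht => ((((hf₁ t ht.1).1.add ((hf₂ t ht.1).1.const_mul ε₂)).const_mul (ε₁ / 2)).const_mul
      τ).add (((hasDerivAt_id t).const_mul p).add_const q))
    (fun t ht => ((((hf₁ t ht.1).2.add ((hf₂ t ht.1).2.const_mul ε₂)).const_mul
      (ε₁ / 2)).const_mul τ).add_const (p * 1))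
    (continuousOn_const.mul (continuousOn_const.mul ((hcont γ hγ.ne').add
      (continuousOn_const.mul (hcont (-γ) (neg_ne_zero.2 hγ.ne'))))))
    fun t ht => ?_
  have htR : t ∈ Icc 0 (2 * R) := ⟨ht.1, ht.2.trans hs.2⟩
  rw [show ∀ x, τ * (ε₁ / 2 * x) = τ / 2 * (ε₁ * x) from fun x => by ring, abs_mul,
    abs_of_pos (half_pos hτ)]
  refine mul_le_mul_of_nonneg_left (le_trans ?_ (sub_le_abs_mul_add_mul hε₁ hε₂ ?_))
    (half_pos hτ).le
  · exact le_div_cube_sub_div_cube hγ.le hb (hpos (neg_ne_zero.2 hγ.ne') ht.1)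
      (sqrtBranch_neg_le hγ.le ht.1) (sqrtBranch_cone_le hγ.le hR hρ.le hρR htR)
  · exact div_nonneg (sq_nonneg _) (pow_pos (hpos hγ.ne' ht.1) 3).le

end Phase

/-! ### The ray estimate -/

section Ray

open Set

/-- The frequency cut-off `Psi` as a function of `h = |ξ_h|` and `t = ξ₃`. -/
def psiProfile (ψ : ℝ → ℝ) (r R h t : ℝ) : ℝ :=
  ψ (√(h ^ 2 + t ^ 2) / R) * ((1 - ψ (h / r)) * (1 - ψ (|t| / r)))

namespace IsCutoff

variable {ψ : ℝ → ℝ}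

lemma contDiff_one (hψ : IsCutoff ψ) : ContDiff ℝ 1 ψ := hψ.1.of_le (by exact_mod_cast le_top)

lemma eq_one (hψ : IsCutoff ψ) {x : ℝ} (hx : x ≤ 1) : ψ x = 1 := hψ.2.2.1 x hx

lemma eq_zero (hψ : IsCutoff ψ) {x : ℝ} (hx : 2 ≤ x) : ψ x = 0 := hψ.2.2.2 x hx

lemma abs_le_one (hψ : IsCutoff ψ) (x : ℝ) : |ψ x| ≤ 1 :=
  (abs_of_nonneg (hψ.2.1 x).1).trans_le (hψ.2.1 x).2

lemma abs_one_sub_le_one (hψ : IsCutoff ψ) (x : ℝ) : |1 - ψ x| ≤ 1 := by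
  rw [abs_of_nonneg (sub_nonneg.2 (hψ.2.1 x).2)]
  exact sub_le_self 1 (hψ.2.1 x).1

lemma integrable_deriv (hψ : IsCutoff ψ) : Integrable (deriv ψ) := by
  refine (hψ.contDiff_one.continuous_deriv le_rfl).integrable_of_hasCompactSupport
    (HasCompactSupport.intro (isCompact_Icc (a := 1) (b := 2)) fun x hx => ?_)
  rcases not_and_or.1 hx with h | h
  · have : ψ =ᶠ[nhds x] fun _ => 1 :=
      mem_of_superset (Iio_mem_nhds (not_le.1 h)) fun y hy => hψ.eq_one hy.le
    rw [this.deriv_eq, deriv_const]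
  · have : ψ =ᶠ[nhds x] fun _ => 0 :=
      mem_of_superset (Ioi_mem_nhds (not_le.1 h)) fun y hy => hψ.eq_zero hy.le
    rw [this.deriv_eq, deriv_const]

end IsCutoff

namespace HasInitialIntegralsLE

variable {ψ m m' : ℝ → ℝ} {f : ℝ → ℂ} {a b B : ℝ}

lemma mul_cutoff (h : HasInitialIntegralsLE f a b B) (hψ : IsCutoff ψ)
    (hm : ∀ t ∈ Icc a b, HasDerivAt m (m' t) t) (hm' : ContinuousOn m' (Icc a b))
    (hm'0 : ∀ t ∈ Icc a b, 0 ≤ m' t) :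
    HasInitialIntegralsLE (fun t => f t * ψ (m t)) a b (B * (1 + ∫ x, |deriv ψ x|)) :=
  h.mul_comp hψ.contDiff_one hψ.integrable_deriv hψ.abs_le_one hm hm' hm'0

lemma mul_one_sub_cutoff (h : HasInitialIntegralsLE f a b B) (hψ : IsCutoff ψ)
    (hm : ∀ t ∈ Icc a b, HasDerivAt m (m' t) t) (hm' : ContinuousOn m' (Icc a b))
    (hm'0 : ∀ t ∈ Icc a b, 0 ≤ m' t) :
    HasInitialIntegralsLE (fun t => f t * (1 - ψ (m t) : ℝ)) a b
      (B * (1 + ∫ x, |deriv ψ x|)) := by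
  have hderiv : deriv (fun x => 1 - ψ x) = -deriv ψ := funext fun x => deriv_const_sub 1
  have := h.mul_comp (χ := fun x => 1 - ψ x) (contDiff_const.sub hψ.contDiff_one)
    (hderiv ▸ hψ.integrable_deriv.neg) hψ.abs_one_sub_le_one hm hm' hm'0
  simpa only [hderiv, Pi.neg_apply, abs_neg] using this

end HasInitialIntegralsLE

variable {γ ρ r R : ℝ} {ψ : ℝ → ℝ}

lemma hasInitialIntegralsLE_mul_psiProfile_cone {f : ℝ → ℂ} {b B T : ℝ}
    (hf : HasInitialIntegralsLE f 0 T B) (hψ : IsCutoff ψ) (hb : 0 ≤ b) (hr : 0 ≤ r) (hR : 0 ≤ R)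
    (hρ : 0 < ρ) :
    HasInitialIntegralsLE (fun t => f t * psiProfile ψ r R ((1 + b * t) * ρ) t) 0 T
      (B * (1 + ∫ x, |deriv ψ x|) * (1 + ∫ x, |deriv ψ x|) * (1 + ∫ x, |deriv ψ x|)) := by
  have hpos : ∀ t ∈ Icc 0 T,
      0 < (1 + b ^ 2 * ρ ^ 2) * t ^ 2 + 2 * (b * ρ ^ 2) * t + ρ ^ 2 := fun t ht => by
    have := ht.1
    positivity
  have radial := hf.mul_cutoff hψ
    (fun t ht => (hasDerivAt_sqrt_quadratic (hpos t ht)).div_const R)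
    ((ContinuousOn.div (by fun_prop) (by fun_prop)
      fun t ht => (Real.sqrt_pos.2 (hpos t ht)).ne').div_const R)
    fun t ht => by
      have := ht.1
      positivity
  have horizontal := radial.mul_one_sub_cutoff hψ (m := fun t => (1 + b * t) * ρ / r)
    (fun t _ => ((((hasDerivAt_id t).const_mul b).const_add 1).mul_const ρ).div_const r)
    continuousOn_const fun t _ => by positivity
  have vertical := horizontal.mul_one_sub_cutoff hψ (fun t _ => (hasDerivAt_id t).div_const r)
    continuousOn_const fun t _ => one_div_nonneg.2 hr
  refine vertical.congr fun t ht => ?_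
  have hradius : ((1 + b * t) * ρ) ^ 2 + t ^ 2 =
      (1 + b ^ 2 * ρ ^ 2) * t ^ 2 + 2 * (b * ρ ^ 2) * t + ρ ^ 2 := by ring
  simp only [psiProfile, abs_of_nonneg ht.1, id_eq, hradius, Complex.ofReal_mul, mul_assoc]

lemma hasInitialIntegralsLE_mul_one_add_pow {f : ℝ → ℂ} {B : ℝ} (hR : 0 < R)
    (hf : HasInitialIntegralsLE f 0 (2 * R) B) (d : ℕ) :
    HasInitialIntegralsLE (fun t => f t * ((1 + R⁻¹ * t) ^ d : ℝ)) 0 (2 * R) (3 * 3 ^ d * B) := by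
  have hbase : ∀ t ∈ Icc 0 (2 * R), 0 ≤ 1 + R⁻¹ * t ∧ 1 + R⁻¹ * t ≤ 3 := fun t ht => by
    have h0 : 0 ≤ R⁻¹ * t := mul_nonneg (inv_nonneg.2 hR.le) ht.1
    have h2 : R⁻¹ * t ≤ 2 := by
      rw [inv_mul_le_iff₀ hR, mul_comm]
      exact ht.2
    constructor <;> linarith
  exact hf.mul_ofReal_of_deriv_nonneg
    (fun t _ => (((hasDerivAt_id t).const_mul R⁻¹).const_add 1).pow d) (by fun_prop)
    (fun t ht => by
      have := (hbase t ht).1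
      simp only [id_eq]
      positivity)
    fun t ht => by
      simp only [abs_pow, abs_of_nonneg (hbase t ht).1]
      exact pow_le_pow_left₀ (hbase t ht).1 (hbase t ht).2 d

lemma exists_norm_integral_cone_le (hγ : 0 < γ) (hψ : IsCutoff ψ) (d : ℕ) :
    ∃ C, ∀ {r R ε₁ ε₂ τ ρ p q : ℝ}, 0 ≤ r → 1 ≤ R → |ε₁| = 1 → |ε₂| = 1 → 0 < τ → 0 < ρ →
      ρ ≤ 2 * R →
      ‖∫ t in (0 : ℝ)..2 * R,
          cexp ((τ * lamPhase γ ε₁ ε₂ ((1 + R⁻¹ * t) * ρ) t + (p * t + q) : ℝ) * I) *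
            psiProfile ψ r R ((1 + R⁻¹ * t) * ρ) t * ((1 + R⁻¹ * t) ^ d : ℝ)‖ ≤
        C * (R ^ 2 / (√τ * ρ)) := by
  refine ⟨3 * 3 ^ d * (14 / √(2 * γ ^ 3 / (1 + 8 * γ) ^ 3) * (1 + ∫ x, |deriv ψ x|) ^ 3),
    fun {r R ε₁ ε₂ τ ρ p q} hr hR hε₁ hε₂ hτ hρ hρR => ?_⟩
  have hR0 : 0 < R := zero_lt_one.trans_le hR
  have oscillation : HasInitialIntegralsLE (fun t : ℝ =>
      cexp ((τ * lamPhase γ ε₁ ε₂ ((1 + R⁻¹ * t) * ρ) t + (p * t + q) : ℝ) * I)) 0 (2 * R)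
      (14 / √(τ / 2 * (4 * γ ^ 3 * R⁻¹ * ρ ^ 2 / ((1 + 8 * γ) * R) ^ 3))) := by
    refine ⟨Continuous.continuousOn ?_,
      fun s hs => norm_integral_cexp_lamPhase_cone_le hγ hε₁ hε₂ hR hρ hρR hτ hs⟩
    have : Continuous fun t => lamPhase γ ε₁ ε₂ ((1 + R⁻¹ * t) * ρ) t :=
      continuous_lamPhase.comp (by fun_prop : Continuous fun t : ℝ => ((1 + R⁻¹ * t) * ρ, t))
    fun_prop
  have scaling : √(τ / 2 * (4 * γ ^ 3 * R⁻¹ * ρ ^ 2 / ((1 + 8 * γ) * R) ^ 3)) =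
      √(2 * γ ^ 3 / (1 + 8 * γ) ^ 3) * (√τ * ρ / R ^ 2) := by
    rw [mul_div_assoc √τ, ← Real.sqrt_sq (by positivity : 0 ≤ ρ / R ^ 2), ← Real.sqrt_mul hτ.le,
      ← Real.sqrt_mul (by positivity)]
    congr 1
    field_simp
    ring
  refine ((hasInitialIntegralsLE_mul_one_add_pow hR0 (hasInitialIntegralsLE_mul_psiProfile_cone
    oscillation hψ (inv_nonneg.2 hR0.le) hr hR0.le hρ) d).norm_integral_le (2 * R)
      (right_mem_Icc.2 (by positivity))).trans_eq ?_
  rw [scaling]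
  field_simp

end Ray

/-! ### Conical coordinates -/

section Conical

open Set Metric Module

variable {E : Type*} [NormedAddCommGroup E] [NormedSpace ℝ E] [FiniteDimensional ℝ E]
  [MeasurableSpace E] [BorelSpace E] (μ : Measure E) [μ.IsAddHaarMeasure]

lemma integral_prod_eq_integral_cone {F : E × ℝ → ℂ} {M : ℝ} (hF : Continuous F)
    (hFM : ∀ p, M ≤ ‖p‖ → F p = 0) {ℓ : ℝ → ℝ} (hℓ : Continuous ℓ) (hℓ1 : ∀ t, 1 ≤ ℓ t) :
    ∫ p, F p ∂μ.prod volume =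
      ∫ η, (∫ t, F (ℓ t • η, t) * (ℓ t ^ finrank ℝ E : ℝ)) ∂μ := by
  have hint : ∀ {G : E × ℝ → ℂ}, Continuous G → (∀ p, M ≤ ‖p‖ → G p = 0) →
      Integrable G (μ.prod volume) :=
    fun hG hGM => hG.integrable_of_hasCompactSupport <|
      .intro (isCompact_closedBall 0 M) fun p hp => hGM p
        (not_le.1 (mem_closedBall_zero_iff.not.1 hp)).le
  have dilate : ∀ t, ∫ η, F (η, t) ∂μ =
      ∫ η, F (ℓ t • η, t) * (ℓ t ^ finrank ℝ E : ℝ) ∂μ := fun t => by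
    have hpos : 0 < ℓ t ^ finrank ℝ E := pow_pos (zero_lt_one.trans_le (hℓ1 t)) _
    rw [integral_mul_const, Measure.integral_comp_smul μ (fun η => F (η, t)),
      abs_of_pos (inv_pos.2 hpos), mul_comm, ← Complex.real_smul, smul_inv_smul₀ hpos.ne']
  have cone : Integrable (fun p : E × ℝ => F (ℓ p.2 • p.1, p.2) * (ℓ p.2 ^ finrank ℝ E : ℝ))
      (μ.prod volume) := by
    refine hint (by fun_prop) fun p hp => ?_
    have hp' : M ≤ ‖(ℓ p.2 • p.1, p.2)‖ := hp.trans (max_le_max_right _ ?_)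
    · rw [hFM _ hp', zero_mul]
    rw [norm_smul]
    exact le_mul_of_one_le_left (norm_nonneg _) ((hℓ1 _).trans (le_abs_self _))
  rw [integral_integral_swap (f := fun η t => F (ℓ t • η, t) * (ℓ t ^ finrank ℝ E : ℝ)) cone]
  simp_rw [← dilate]
  exact integral_prod_symm F (hint hF hFM)

lemma integral_eq_intervalIntegral_add_comp_neg {g : ℝ → ℂ} {M : ℝ} (hg : Continuous g)
    (hgM : ∀ t, M ≤ |t| → g t = 0) :
    ∫ t, g t = (∫ t in (0 : ℝ)..M, g t) + ∫ t in (0 : ℝ)..M, g (-t) := by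
  have hsupp : Function.support g ⊆ Ioc (-M) M := fun t ht => by
    have := abs_lt.1 (not_le.1 (mt (hgM t) ht))
    exact ⟨this.1, this.2.le⟩
  rw [← intervalIntegral.integral_eq_integral_of_support_subset hsupp,
    intervalIntegral.integral_comp_neg (a := 0) (b := M) g, neg_zero, add_comm,
    intervalIntegral.integral_add_adjacent_intervals (hg.intervalIntegrable _ _)
      (hg.intervalIntegrable _ _)]

lemma integrableOn_inv_norm_ball (hE : 2 ≤ finrank ℝ E) (M : ℝ) :
    IntegrableOn (fun η : E => ‖η‖⁻¹) (ball 0 M) μ := by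
  have : Nontrivial E := finrank_pos_iff.1 (two_pos.trans_le hE)
  rw [integrableOn_fun_norm_addHaar μ (f := fun y => y⁻¹)]
  refine ((continuous_pow (M := ℝ) (finrank ℝ E - 2)).integrableOn_Icc (a := 0) (b := M)
    |>.mono_set Ioo_subset_Icc_self).congr_fun (fun y hy => ?_) measurableSet_Ioo
  rw [smul_eq_mul, ← pow_sub_one_mul (n := finrank ℝ E - 1) (by omega), Nat.sub_sub, mul_assoc,
    mul_inv_cancel₀ hy.1.ne', mul_one]

lemma setIntegral_inv_norm_ball {M : ℝ} (hM : 0 < M) :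
    ∫ η : E in ball 0 M, ‖η‖⁻¹ ∂μ = M ^ finrank ℝ E * M⁻¹ * ∫ η : E in ball 0 1, ‖η‖⁻¹ ∂μ := by
  have scaling := Measure.setIntegral_comp_smul_of_pos μ (fun η : E => ‖η‖⁻¹) (ball 0 1) hM
  simp only [norm_smul, mul_inv, integral_const_mul, smul_unitBall_of_pos hM, Real.norm_eq_abs,
    abs_of_pos hM, smul_eq_mul] at scaling
  rw [mul_assoc, scaling, mul_inv_cancel_left₀ (pow_pos hM _).ne']

end Conical

/-! ### The kernel in cylindrical coordinates -/

section Cylindrical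

open Set Metric Module

lemma lamPhase_neg {γ ε₁ ε₂ h t : ℝ} (hε₂ : |ε₂| = 1) :
    lamPhase γ ε₁ ε₂ h (-t) = lamPhase γ (ε₁ * ε₂) ε₂ h t := by
  have hsq : ε₂ * ε₂ = 1 := by rw [← abs_mul_abs_self, hε₂, one_mul]
  simp only [lamPhase, sqrtBranch, neg_sq, neg_neg, mul_neg, neg_mul]
  linear_combination -ε₁ / 2 * √(1 + γ ^ 2 * (h ^ 2 + t ^ 2) + -(2 * γ * t)) * hsq

lemma psiProfile_neg {ψ : ℝ → ℝ} {r R h t : ℝ} :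
    psiProfile ψ r R h (-t) = psiProfile ψ r R h t := by
  simp only [psiProfile, neg_sq, abs_neg]

lemma psiProfile_zero_left {ψ : ℝ → ℝ} (hψ : IsCutoff ψ) {r R t : ℝ} :
    psiProfile ψ r R 0 t = 0 := by
  simp only [psiProfile, zero_div, hψ.eq_one zero_le_one, sub_self, zero_mul, mul_zero]

lemma psiProfile_eq_zero {ψ : ℝ → ℝ} (hψ : IsCutoff ψ) {r R h t : ℝ} (hR : 0 < R)
    (h2R : 2 * R ≤ √(h ^ 2 + t ^ 2)) : psiProfile ψ r R h t = 0 := by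
  rw [psiProfile, hψ.eq_zero ((le_div_iff₀ hR).2 h2R), zero_mul]

lemma continuous_psiProfile {ψ : ℝ → ℝ} (hψ : IsCutoff ψ) {r R : ℝ} :
    Continuous fun p : ℝ × ℝ => psiProfile ψ r R p.1 p.2 := by
  have := hψ.contDiff_one.continuous
  unfold psiProfile
  fun_prop

variable {E : Type*} [NormedAddCommGroup E] [InnerProductSpace ℝ E]

/-- The integrand of the kernel as a function of `p = (ξ_h, ξ₃)`, for the space variable `(y, z)`
and horizontal frequencies in an arbitrary inner product space `E`. -/
def cylIntegrand (ψ : ℝ → ℝ) (r R γ ε₁ ε₂ τ : ℝ) (y : E) (z : ℝ) (p : E × ℝ) : ℂ :=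
  cexp ((τ * lamPhase γ ε₁ ε₂ ‖p.1‖ p.2 + (inner ℝ y p.1 + z * p.2) : ℝ) * I) *
    psiProfile ψ r R ‖p.1‖ p.2

variable {ψ : ℝ → ℝ} {r R γ ε₁ ε₂ τ : ℝ} {y : E} {z : ℝ}

lemma continuous_cylIntegrand (hψ : IsCutoff ψ) :
    Continuous (cylIntegrand ψ r R γ ε₁ ε₂ τ y z) := by
  have hcyl : Continuous fun p : E × ℝ => (‖p.1‖, p.2) := by fun_prop
  have hphase := (continuous_lamPhase (γ := γ) (ε₁ := ε₁) (ε₂ := ε₂)).comp hcyl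
  have hprofile := (continuous_psiProfile hψ (r := r) (R := R)).comp hcyl
  simp only [Function.comp_def] at hphase hprofile
  unfold cylIntegrand
  fun_prop

lemma cylIntegrand_eq_zero (hψ : IsCutoff ψ) (hR : 0 < R) {p : E × ℝ} (hp : 2 * R ≤ ‖p‖) :
    cylIntegrand ψ r R γ ε₁ ε₂ τ y z p = 0 := by
  have hnorm : ‖p‖ ≤ √(‖p.1‖ ^ 2 + p.2 ^ 2) :=
    max_le (Real.le_sqrt_of_sq_le (le_add_of_nonneg_right (sq_nonneg _)))
      (Real.abs_le_sqrt (le_add_of_nonneg_left (sq_nonneg _)))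
  rw [cylIntegrand, psiProfile_eq_zero hψ hR (hp.trans hnorm), Complex.ofReal_zero, mul_zero]

lemma cylIntegrand_smul_eq_zero (hψ : IsCutoff ψ) (hR : 0 < R) {c t : ℝ} {η : E} (hc : 1 ≤ c)
    (hη : 2 * R ≤ ‖η‖) : cylIntegrand ψ r R γ ε₁ ε₂ τ y z (c • η, t) = 0 := by
  refine cylIntegrand_eq_zero hψ hR (hη.trans (le_max_of_le_left ?_))
  rw [norm_smul]
  exact le_mul_of_one_le_left (norm_nonneg _) (hc.trans (le_abs_self c))

lemma cylIntegrand_zero_left (hψ : IsCutoff ψ) {t : ℝ} :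
    cylIntegrand ψ r R γ ε₁ ε₂ τ y z (0, t) = 0 := by
  simp only [cylIntegrand, norm_zero, psiProfile_zero_left hψ, Complex.ofReal_zero, mul_zero]

lemma cylIntegrand_neg_right (hε₂ : |ε₂| = 1) {η : E} {t : ℝ} :
    cylIntegrand ψ r R γ ε₁ ε₂ τ y z (η, -t) =
      cylIntegrand ψ r R γ (ε₁ * ε₂) ε₂ τ y (-z) (η, t) := by
  simp only [cylIntegrand, lamPhase_neg hε₂, psiProfile_neg, neg_mul, mul_neg]

lemma exists_norm_integral_cylIntegrand_half_line_le (hγ : 0 < γ) (hψ : IsCutoff ψ) (d : ℕ) :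
    ∃ C, ∀ {r R ε₁ ε₂ τ z : ℝ} {y η : E}, 0 ≤ r → 1 ≤ R → |ε₁| = 1 → |ε₂| = 1 → 0 < τ → η ≠ 0 →
      ‖η‖ ≤ 2 * R →
      ‖∫ t in (0 : ℝ)..2 * R, cylIntegrand ψ r R γ ε₁ ε₂ τ y z ((1 + R⁻¹ * |t|) • η, t) *
        ((1 + R⁻¹ * |t|) ^ d : ℝ)‖ ≤ C * (R ^ 2 / (√τ * ‖η‖)) := by
  obtain ⟨C, hC⟩ := exists_norm_integral_cone_le hγ hψ d
  refine ⟨C, fun {r R ε₁ ε₂ τ z y η} hr hR hε₁ hε₂ hτ hη hηR => ?_⟩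
  have hR0 : 0 < R := zero_lt_one.trans_le hR
  refine le_of_eq_of_le (congrArg norm (intervalIntegral.integral_congr fun t ht => ?_))
    (hC (p := R⁻¹ * inner ℝ y η + z) (q := inner ℝ y η) hr hR hε₁ hε₂ hτ (norm_pos_iff.2 hη) hηR)
  rw [uIcc_of_le (mul_pos two_pos hR0).le] at ht
  have hlinear : inner ℝ y ((1 + R⁻¹ * t) • η) + z * t =
      (R⁻¹ * inner ℝ y η + z) * t + inner ℝ y η := by
    rw [real_inner_smul_right]
    ring
  have hnorm : ‖(1 + R⁻¹ * t) • η‖ = (1 + R⁻¹ * t) * ‖η‖ :=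
    norm_smul_of_nonneg (by have := ht.1; positivity) η
  simp only [abs_of_nonneg ht.1, cylIntegrand, hnorm, hlinear]

lemma exists_norm_integral_cylIntegrand_line_le (hγ : 0 < γ) (hψ : IsCutoff ψ) (d : ℕ) :
    ∃ C, ∀ {r R ε₁ ε₂ τ z : ℝ} {y η : E}, 0 ≤ r → 1 ≤ R → |ε₁| = 1 → |ε₂| = 1 → 0 < τ →
      ‖∫ t, cylIntegrand ψ r R γ ε₁ ε₂ τ y z ((1 + R⁻¹ * |t|) • η, t) *
        ((1 + R⁻¹ * |t|) ^ d : ℝ)‖ ≤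
      (ball 0 (2 * R)).indicator (fun η => C * (R ^ 2 / √τ) * ‖η‖⁻¹) η := by
  obtain ⟨C, hC⟩ := exists_norm_integral_cylIntegrand_half_line_le (E := E) hγ hψ d
  refine ⟨2 * C, fun {r R ε₁ ε₂ τ z y η} hr hR hε₁ hε₂ hτ => ?_⟩
  have hR0 : 0 < R := zero_lt_one.trans_le hR
  by_cases hη : η ∈ ball 0 (2 * R)
  swap
  · have hvanish : ∀ t, cylIntegrand ψ r R γ ε₁ ε₂ τ y z ((1 + R⁻¹ * |t|) • η, t) = 0 := fun t =>
      cylIntegrand_smul_eq_zero hψ hR0 (le_add_of_nonneg_right (by positivity))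
        (not_lt.1 (mem_ball_zero_iff.not.1 hη))
    simp only [hvanish, zero_mul, integral_zero, norm_zero, indicator_of_notMem hη, le_refl]
  rw [indicator_of_mem hη]
  obtain rfl | hη0 := eq_or_ne η 0
  · simp only [smul_zero, cylIntegrand_zero_left hψ, zero_mul, integral_zero, norm_zero,
      _root_.inv_zero, mul_zero, le_refl]
  have hηR : ‖η‖ ≤ 2 * R := (mem_ball_zero_iff.1 hη).le
  have hε₁₂ : |ε₁ * ε₂| = 1 := by rw [abs_mul, hε₁, hε₂, one_mul]
  have hcont : Continuous fun t : ℝ => cylIntegrand ψ r R γ ε₁ ε₂ τ y z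
      ((1 + R⁻¹ * |t|) • η, t) * ((1 + R⁻¹ * |t|) ^ d : ℝ) :=
    ((continuous_cylIntegrand hψ).comp
      (by fun_prop : Continuous fun t : ℝ => ((1 + R⁻¹ * |t|) • η, t))).mul (by fun_prop)
  rw [integral_eq_intervalIntegral_add_comp_neg (M := 2 * R) hcont
    fun t ht => mul_eq_zero_of_left (cylIntegrand_eq_zero hψ hR0 (le_max_of_le_right ht)) _]
  simp only [abs_neg, cylIntegrand_neg_right hε₂]
  calc _ ≤ C * (R ^ 2 / (√τ * ‖η‖)) + C * (R ^ 2 / (√τ * ‖η‖)) :=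
        norm_add_le_of_le (hC hr hR hε₁ hε₂ hτ hη0 hηR) (hC hr hR hε₁₂ hε₂ hτ hη0 hηR)
    _ = 2 * C * (R ^ 2 / √τ) * ‖η‖⁻¹ := by rw [← div_div]; ring

theorem exists_norm_integral_cylIntegrand_le [FiniteDimensional ℝ E] [MeasurableSpace E]
    [BorelSpace E] (μ : Measure E) [μ.IsAddHaarMeasure] (hE : 2 ≤ finrank ℝ E) (hγ : 0 < γ)
    (hψ : IsCutoff ψ) :
    ∃ C, ∀ {r R ε₁ ε₂ τ z : ℝ} {y : E}, 0 ≤ r → 1 ≤ R → |ε₁| = 1 → |ε₂| = 1 → 0 < τ →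
      ‖∫ p, cylIntegrand ψ r R γ ε₁ ε₂ τ y z p ∂μ.prod volume‖ ≤
        C * (R ^ (finrank ℝ E + 1) / √τ) := by
  obtain ⟨C, hC⟩ := exists_norm_integral_cylIntegrand_line_le (E := E) hγ hψ (finrank ℝ E)
  refine ⟨C * (2 ^ finrank ℝ E * 2⁻¹ * ∫ η : E in ball 0 1, ‖η‖⁻¹ ∂μ),
    fun {r R ε₁ ε₂ τ z y} hr hR hε₁ hε₂ hτ => ?_⟩
  have hR0 : 0 < R := zero_lt_one.trans_le hR
  rw [integral_prod_eq_integral_cone μ (continuous_cylIntegrand hψ)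
    (fun p => cylIntegrand_eq_zero hψ hR0) (ℓ := fun t => 1 + R⁻¹ * |t|) (by fun_prop)
    fun t => le_add_of_nonneg_right (by positivity)]
  have majorant : IntegrableOn (fun η : E => C * (R ^ 2 / √τ) * ‖η‖⁻¹) (ball 0 (2 * R)) μ :=
    (integrableOn_inv_norm_ball μ hE _).const_mul _
  refine (norm_integral_le_of_norm_le (majorant.integrable_indicator measurableSet_ball)
    (.of_forall fun η => hC hr hR hε₁ hε₂ hτ)).trans_eq ?_
  rw [integral_indicator measurableSet_ball, integral_const_mul,
    setIntegral_inv_norm_ball μ (by positivity), mul_pow, pow_succ R]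
  field_simp
  ring

end Cylindrical

/-! ### The kernel on `ℝ³` -/

section Kernel

/-- The splitting `ξ = (ξ_h, ξ₃)` of a frequency, as a measurable equivalence. -/
def cylEquiv : E3 ≃ᵐ EuclideanSpace ℝ (Fin 2) × ℝ :=
  (MeasurableEquiv.toLp 2 (Fin 3 → ℝ)).symm.trans <|
    (MeasurableEquiv.piFinSuccAbove (fun _ => ℝ) 2).trans <| MeasurableEquiv.prodComm.trans <|
      (MeasurableEquiv.toLp 2 (Fin 2 → ℝ)).prodCongr (.refl ℝ)

lemma volume_preserving_cylEquiv : MeasurePreserving cylEquiv :=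
  (((PiLp.volume_preserving_toLp (Fin 2)).prod (.id volume)).comp
    Measure.measurePreserving_swap).comp <|
      (volume_preserving_piFinSuccAbove (fun _ : Fin 3 => ℝ) 2).comp
        (PiLp.volume_preserving_ofLp (Fin 3))

lemma cylEquiv_snd (ξ : E3) : (cylEquiv ξ).2 = ξ 2 := rfl

lemma norm_cylEquiv_fst (ξ : E3) : ‖(cylEquiv ξ).1‖ = xih ξ := by
  rw [EuclideanSpace.norm_eq, Fin.sum_univ_two, xih]
  simp only [Real.norm_eq_abs, sq_abs]
  rfl

lemma norm_eq_sqrt_xih (ξ : E3) : ‖ξ‖ = √(xih ξ ^ 2 + ξ 2 ^ 2) := by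
  rw [xih, Real.sq_sqrt (by positivity), EuclideanSpace.norm_eq, Fin.sum_univ_three]
  simp only [Real.norm_eq_abs, sq_abs]

lemma inner_cylEquiv (x ξ : E3) :
    inner ℝ (cylEquiv x).1 (cylEquiv ξ).1 + x 2 * ξ 2 = inner ℝ x ξ := by
  rw [PiLp.inner_apply, PiLp.inner_apply, Fin.sum_univ_two, Fin.sum_univ_three, mul_comm (x 2)]
  rfl

lemma Psi_eq_psiProfile (ψ : ℝ → ℝ) (r R : ℝ) (ξ : E3) :
    Psi ψ r R ξ = psiProfile ψ r R (xih ξ) (ξ 2) := by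
  rw [Psi, psiProfile, norm_eq_sqrt_xih]

lemma lamEV_eq_lamPhase (γ ε₁ ε₂ : ℝ) (ξ : E3) :
    lamEV γ ε₁ ε₂ ξ = lamPhase γ ε₁ ε₂ (xih ξ) (ξ 2) * I := by
  have hnorm : xih ξ ^ 2 + ξ 2 ^ 2 = ‖ξ‖ ^ 2 := by
    rw [norm_eq_sqrt_xih, Real.sq_sqrt (by positivity)]
  simp only [lamEV, lamPhase, sqrtBranch, hnorm, neg_sq, mul_neg, neg_mul, ← sub_eq_add_neg]
  push_cast
  ring

lemma Kker_eq_integral_cylIntegrand (ψ : ℝ → ℝ) (r R γ ε₁ ε₂ τ : ℝ) (x : E3) :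
    Kker ψ r R γ ε₁ ε₂ τ x =
      ∫ p, cylIntegrand ψ r R γ ε₁ ε₂ τ (cylEquiv x).1 (x 2) p := by
  rw [Kker, ← volume_preserving_cylEquiv.integral_comp']
  refine integral_congr_ae (.of_forall fun ξ => ?_)
  simp only [cylIntegrand, cylEquiv_snd, norm_cylEquiv_fst, inner_cylEquiv, Psi_eq_psiProfile,
    lamEV_eq_lamPhase]
  push_cast
  ring_nf

theorem Kker_bound_general (γ : ℝ) (hγ : 0 < γ) (ψ : ℝ → ℝ) (hψ : IsCutoff ψ) :
    ∃ C : ℝ, 0 < C ∧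
      ∀ r R : ℝ, 0 < r → 1 ≤ R →
      ∀ ε1 ε2 : ℝ, (ε1 = 1 ∨ ε1 = -1) → (ε2 = 1 ∨ ε2 = -1) →
      ∀ τ : ℝ, 0 < τ →
      ∀ x : E3, ‖Kker ψ r R γ ε1 ε2 τ x‖ ≤ C * R ^ 3 * τ ^ (-(1:ℝ)/2) := by
  have hdim : Module.finrank ℝ (EuclideanSpace ℝ (Fin 2)) = 2 := finrank_euclideanSpace_fin
  obtain ⟨C, hC⟩ := exists_norm_integral_cylIntegrand_le
    (volume : Measure (EuclideanSpace ℝ (Fin 2))) hdim.ge hγ hψ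
  rw [hdim] at hC
  refine ⟨max C 1, by positivity, fun r R hr hR ε1 ε2 hε1 hε2 τ hτ x => ?_⟩
  rw [Kker_eq_integral_cylIntegrand]
  calc _ ≤ C * (R ^ (2 + 1) / √τ) :=
        hC hr.le hR ((abs_eq zero_le_one).2 hε1) ((abs_eq zero_le_one).2 hε2) hτ
    _ ≤ max C 1 * (R ^ 3 / √τ) :=
        mul_le_mul_of_nonneg_right (le_max_left C 1) (by positivity)
    _ = max C 1 * R ^ 3 * τ ^ (-(1:ℝ)/2) := by
        rw [neg_div, Real.rpow_neg hτ.le, ← Real.sqrt_eq_rpow, mul_assoc, div_eq_mul_inv]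

end Kernel

/-- For `0 < r ≤ 1 ≤ R`, each phase `λ = λ_{ε₁,ε₂}` and every `τ > 0`,
`sup_x |K_λ(τ,x)| ≤ C R³ r^{−2} τ^{−1/2}`, with `C` depending only on `γ̄` and `ψ`. -/
theorem Kker_bound (γ : ℝ) (hγ : 0 < γ) (ψ : ℝ → ℝ) (hψ : IsCutoff ψ) :
    ∃ C : ℝ, 0 < C ∧
      ∀ r R : ℝ, 0 < r → r ≤ 1 → 1 ≤ R →
      ∀ ε1 ε2 : ℝ, (ε1 = 1 ∨ ε1 = -1) → (ε2 = 1 ∨ ε2 = -1) →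
      ∀ τ : ℝ, 0 < τ →
      ∀ x : E3, ‖Kker ψ r R γ ε1 ε2 τ x‖ ≤
        C * R ^ 3 * r ^ (-(2:ℝ)) * τ ^ (-(1:ℝ)/2) := by
  obtain ⟨C, hC, h⟩ := Kker_bound_general γ hγ ψ hψ
  refine ⟨C, hC, fun r R hr hr1 hR ε1 ε2 hε1 hε2 τ hτ x =>
    (h r R hr hR ε1 ε2 hε1 hε2 τ hτ x).trans ?_⟩
  have hr2 : 1 ≤ r ^ (-(2:ℝ)) :=
    Real.one_le_rpow_of_pos_of_le_one_of_nonpos hr hr1 (neg_nonpos.2 zero_le_two)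
  exact mul_le_mul_of_nonneg_right (le_mul_of_one_le_right (by positivity) hr2) (by positivity)
end
end

section
/- Let 0 < r ≤ 1 ≤ R, ε > 0, and let λ be one of the four phases λ_{ε₁,ε₂}. Then there exists a constant C > 0, depending only on γ̄ and ψ, such that for every t > 0 and every f ∈ L¹(ℝ³), ‖Ψ_{r,R}(D) G_λ(t) f‖_{L^∞(ℝ³)} ≤ C R³ r^{−2} (ε/t)^{1/2} ‖f‖_{L¹(ℝ³)}. -/
/- Common setup: the space ℝ³ (as a Euclidean space), Fourier transform,
   partial derivatives, Sobolev-type norms. -/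

noncomputable section

open MeasureTheory Real Complex Filter ENNReal

/-- The cut-off scalar propagator `Ψ_{r,R}(D) G_λ(t) f = 𝓕⁻¹(Ψ_{r,R}(ξ) e^{(t/ε)λ(ξ)} f̂(ξ))`. -/
def PsiG (ψ : ℝ → ℝ) (r R γ ε1 ε2 ε t : ℝ) (f : E3 → ℂ) : E3 → ℂ :=
  FTinv (fun ξ => ((Psi ψ r R ξ : ℝ) : ℂ) *
    Complex.exp (((t / ε : ℝ) : ℂ) * lamEV γ ε1 ε2 ξ) * FT f ξ)

/-!
By Fourier inversion it suffices to bound the kernel `𝓕⁻¹(Ψ_{r,R} e^{τλ})`, `τ = t / ε`, in sup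
norm. In cylindrical coordinates, and after folding `ξ₃ < 0` onto `ξ₃ > 0`, the kernel on each half
plane `{θ = const}` is an oscillatory integral over the quadrant `ρ, z > r` whose phase is a
combination `(d(-z) ± d(z)) / 2` of the distances to the two foci `(0, 0, ±1/γ)`, up to linear
terms.

Along a line, the second derivative of a distance is the squared distance from the focus to the line
divided by the cube of the distance. For the minus sign the two convex terms compete, and the
difference degenerates on vertical lines where `z` is small compared with `ρ`. There the lines
`ρ = w + z` help: they pass closer to the focus entering with the minus sign. So one integrates over
`z` first where `ρ < 2z`, over the diagonals where `ρ ≥ 2z`, and applies van der Corput's lemma to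
the second derivative in both regions. This gives `τ^{-1/2}` for the inner integral and costs only
the length of the range of the outer one.
-/

/-! ### Van der Corput's lemma -/

section VanDerCorput

variable {h h' h'' : ℝ → ℝ} {a b δ : ℝ}

lemma abs_div_add_sq_le (hδ : 0 < δ) (x : ℝ) : |x / (δ + x ^ 2)| ≤ 1 / (2 * √δ) := by
  have hden : 0 < δ + x ^ 2 := by positivity
  rw [abs_div, abs_of_pos hden, div_le_div_iff₀ hden (by positivity)]
  nlinarith [sq_nonneg (|x| - √δ), sq_abs x, Real.sq_sqrt hδ.le]

lemma intervalIntegrable_div_add_sq (hab : a ≤ b) (hδ : 0 < δ)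
    (hh' : ∀ u ∈ Set.Icc a b, HasDerivAt h' (h'' u) u) (hcont : ContinuousOn h'' (Set.Icc a b)) :
    IntervalIntegrable (fun u => h'' u / (δ + h' u ^ 2)) volume a b := by
  have hc : ContinuousOn h' (Set.Icc a b) :=
    fun u hu => (hh' u hu).continuousAt.continuousWithinAt
  refine ContinuousOn.intervalIntegrable (Set.uIcc_of_le hab ▸ ?_)
  exact hcont.div (by fun_prop) fun u _ => by positivity

lemma intervalIntegral_div_add_sq_le (hab : a ≤ b) (hδ : 0 < δ)
    (hh' : ∀ u ∈ Set.Icc a b, HasDerivAt h' (h'' u) u) (hcont : ContinuousOn h'' (Set.Icc a b)) :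
    ∫ u in a..b, h'' u / (δ + h' u ^ 2) ≤ π / √δ := by
  have hderiv : ∀ u ∈ Set.uIcc a b,
      HasDerivAt (fun u => Real.arctan (h' u / √δ) / √δ) (h'' u / (δ + h' u ^ 2)) u := by
    intro u hu
    rw [Set.uIcc_of_le hab] at hu
    convert! ((hh' u hu).div_const √δ).arctan.div_const √δ using 1
    rw [div_pow, Real.sq_sqrt hδ.le]
    have : δ + h' u ^ 2 ≠ 0 := by positivity
    field_simp
    rw [Real.sq_sqrt hδ.le, mul_comm]
  rw [intervalIntegral.integral_eq_sub_of_hasDerivAt hderiv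
    (intervalIntegrable_div_add_sq hab hδ hh' hcont), ← sub_div]
  gcongr
  linarith [Real.arctan_lt_pi_div_two (h' b / √δ), Real.neg_pi_div_two_lt_arctan (h' a / √δ)]

lemma hasDerivAt_div_add_sq_mul_cexp (hδ : 0 < δ) {u : ℝ} (hh : HasDerivAt h (h' u) u)
    (hh' : HasDerivAt h' (h'' u) u) :
    HasDerivAt (fun u => ((h' u / (δ + h' u ^ 2) : ℝ) : ℂ) * cexp (I * h u))
      (((h'' u * (δ - h' u ^ 2) / (δ + h' u ^ 2) ^ 2 : ℝ) + I * (h' u ^ 2 / (δ + h' u ^ 2) : ℝ)) *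
        cexp (I * h u)) u := by
  have hden : δ + h' u ^ 2 ≠ 0 := by positivity
  have hweight : HasDerivAt (fun u => h' u / (δ + h' u ^ 2))
      (h'' u * (δ - h' u ^ 2) / (δ + h' u ^ 2) ^ 2) u := by
    convert! hh'.div ((hh'.pow 2).const_add δ) hden using 1
    simp only [Pi.pow_apply, Nat.cast_ofNat, Nat.add_one_sub_one, pow_one]
    congr 1
    ring
  have hexp : HasDerivAt (fun u => cexp (I * h u)) (cexp (I * h u) * (I * h' u)) u :=
    (hh.ofReal_comp.const_mul I).cexp
  convert! hweight.ofReal_comp.mul hexp using 1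
  push_cast
  ring

lemma intervalIntegrable_deriv_div_add_sq_mul_cexp (hab : a ≤ b) (hδ : 0 < δ)
    (hh : ∀ u ∈ Set.Icc a b, HasDerivAt h (h' u) u)
    (hh' : ∀ u ∈ Set.Icc a b, HasDerivAt h' (h'' u) u) (hcont : ContinuousOn h'' (Set.Icc a b)) :
    IntervalIntegrable (fun u => ((h'' u * (δ - h' u ^ 2) / (δ + h' u ^ 2) ^ 2 : ℝ) +
      I * (h' u ^ 2 / (δ + h' u ^ 2) : ℝ)) * cexp (I * h u)) volume a b := by
  have hc : ContinuousOn h (Set.Icc a b) := fun u hu => (hh u hu).continuousAt.continuousWithinAt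
  have hc' : ContinuousOn h' (Set.Icc a b) :=
    fun u hu => (hh' u hu).continuousAt.continuousWithinAt
  have hden : ∀ u, δ + h' u ^ 2 ≠ 0 := fun u => by positivity
  have hre : ContinuousOn (fun u => h'' u * (δ - h' u ^ 2) / (δ + h' u ^ 2) ^ 2) (Set.Icc a b) :=
    ContinuousOn.div (by fun_prop) (by fun_prop) fun u _ => pow_ne_zero 2 (hden u)
  have him : ContinuousOn (fun u => h' u ^ 2 / (δ + h' u ^ 2)) (Set.Icc a b) :=
    ContinuousOn.div (by fun_prop) (by fun_prop) fun u _ => hden u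
  exact ContinuousOn.intervalIntegrable (Set.uIcc_of_le hab ▸ by fun_prop)

lemma norm_cexp_add_I_mul_deriv_le (hδ : 0 < δ) (x p q : ℝ) (hq : δ ≤ q) :
    ‖cexp (I * x) + I * (((q * (δ - p ^ 2) / (δ + p ^ 2) ^ 2 : ℝ) +
      I * (p ^ 2 / (δ + p ^ 2) : ℝ)) * cexp (I * x))‖ ≤ 2 * (q / (δ + p ^ 2)) := by
  have hden : 0 < δ + p ^ 2 := by positivity
  have hfactor : cexp (I * x) + I * (((q * (δ - p ^ 2) / (δ + p ^ 2) ^ 2 : ℝ) +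
      I * (p ^ 2 / (δ + p ^ 2) : ℝ)) * cexp (I * x)) =
      ((δ / (δ + p ^ 2) : ℝ) + I * (q * (δ - p ^ 2) / (δ + p ^ 2) ^ 2 : ℝ)) * cexp (I * x) := by
    have : δ / (δ + p ^ 2) = 1 - p ^ 2 / (δ + p ^ 2) := by field_simp; ring
    rw [this]
    push_cast
    linear_combination (p ^ 2 / (δ + p ^ 2) : ℂ) * cexp (I * x) * I_mul_I
  have hfirst : |δ / (δ + p ^ 2)| ≤ q / (δ + p ^ 2) := by
    rw [abs_of_pos (by positivity)]
    gcongr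
  have hsecond : |q * (δ - p ^ 2) / (δ + p ^ 2) ^ 2| ≤ q / (δ + p ^ 2) := by
    have hq0 : 0 ≤ q := hδ.le.trans hq
    have hnum : |δ - p ^ 2| ≤ δ + p ^ 2 := abs_le.2 ⟨by linarith, by linarith [sq_nonneg p]⟩
    rw [abs_div, abs_mul, abs_of_nonneg hq0, abs_of_pos (pow_pos hden 2)]
    calc q * |δ - p ^ 2| / (δ + p ^ 2) ^ 2 ≤ q * (δ + p ^ 2) / (δ + p ^ 2) ^ 2 := by gcongr
      _ = q / (δ + p ^ 2) := by field_simp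
  rw [hfactor, norm_mul, Complex.norm_exp_I_mul_ofReal, mul_one]
  refine (norm_add_le _ _).trans ?_
  rw [norm_mul, norm_I, one_mul, norm_real, norm_real, Real.norm_eq_abs, Real.norm_eq_abs]
  linarith

/-- Integrating by parts against `w = h' / (δ + h' ^ 2)` instead of the usual `1 / h'` avoids
splitting off a neighbourhood of the critical point. -/
theorem norm_integral_cexp_le_of_le_second_deriv (hab : a ≤ b) (hδ : 0 < δ)
    (hh : ∀ u ∈ Set.Icc a b, HasDerivAt h (h' u) u)
    (hh' : ∀ u ∈ Set.Icc a b, HasDerivAt h' (h'' u) u) (hcont : ContinuousOn h'' (Set.Icc a b))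
    (hle : ∀ u ∈ Set.Icc a b, δ ≤ h'' u) :
    ‖∫ u in a..b, cexp (I * h u)‖ ≤ 8 / √δ := by
  have huIcc : Set.uIcc a b = Set.Icc a b := Set.uIcc_of_le hab
  have hc : ContinuousOn h (Set.Icc a b) := fun u hu => (hh u hu).continuousAt.continuousWithinAt
  set Θ : ℝ → ℂ := fun u => ((h' u / (δ + h' u ^ 2) : ℝ) : ℂ) * cexp (I * h u) with hΘ
  set Θ' : ℝ → ℂ := fun u => ((h'' u * (δ - h' u ^ 2) / (δ + h' u ^ 2) ^ 2 : ℝ) +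
    I * (h' u ^ 2 / (δ + h' u ^ 2) : ℝ)) * cexp (I * h u)
  have hΘint : IntervalIntegrable Θ' volume a b :=
    intervalIntegrable_deriv_div_add_sq_mul_cexp hab hδ hh hh' hcont
  have hexp : IntervalIntegrable (fun u => cexp (I * h u)) volume a b :=
    ContinuousOn.intervalIntegrable (huIcc ▸ by fun_prop)
  have hFTC : ∫ u in a..b, Θ' u = Θ b - Θ a :=
    intervalIntegral.integral_eq_sub_of_hasDerivAt (fun u hu =>
      hasDerivAt_div_add_sq_mul_cexp hδ (hh u (huIcc ▸ hu)) (hh' u (huIcc ▸ hu))) hΘint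
  have hsplit : ∫ u in a..b, cexp (I * h u) =
      (∫ u in a..b, (cexp (I * h u) + I * Θ' u)) - I * (Θ b - Θ a) := by
    rw [intervalIntegral.integral_add hexp (hΘint.const_mul I),
      intervalIntegral.integral_const_mul, hFTC, add_sub_cancel_right]
  have hbulk : ‖∫ u in a..b, (cexp (I * h u) + I * Θ' u)‖ ≤ 2 * (π / √δ) := by
    refine (intervalIntegral.norm_integral_le_of_norm_le hab
      (.of_forall fun u hu => norm_cexp_add_I_mul_deriv_le hδ (h u) (h' u) (h'' u)
        (hle u ⟨hu.1.le, hu.2⟩))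
      ((intervalIntegrable_div_add_sq hab hδ hh' hcont).const_mul 2)).trans ?_
    rw [intervalIntegral.integral_const_mul]
    gcongr
    exact intervalIntegral_div_add_sq_le hab hδ hh' hcont
  have hboundary : ∀ u, ‖Θ u‖ ≤ 1 / (2 * √δ) := fun u => by
    rw [hΘ, norm_mul, Complex.norm_exp_I_mul_ofReal, mul_one, norm_real, Real.norm_eq_abs]
    exact abs_div_add_sq_le hδ _
  calc ‖∫ u in a..b, cexp (I * h u)‖
      ≤ ‖∫ u in a..b, (cexp (I * h u) + I * Θ' u)‖ + ‖I * (Θ b - Θ a)‖ := hsplit ▸ norm_sub_le _ _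
    _ ≤ 2 * (π / √δ) + (1 / (2 * √δ) + 1 / (2 * √δ)) := by
        rw [norm_mul, norm_I, one_mul]
        exact add_le_add hbulk ((norm_sub_le _ _).trans (add_le_add (hboundary b) (hboundary a)))
    _ = (2 * π + 1) / √δ := by field_simp; ring
    _ ≤ 8 / √δ := by gcongr; linarith [Real.pi_lt_d2]

end VanDerCorput

/-- `f` is an amplitude for oscillatory integrals over `[a, b]`: it is `C¹` there, bounded by `S`,
and of total variation `∫ |f'|` at most `V`. -/
structure AmplitudeBound (f : ℝ → ℝ) (a b S V : ℝ) : Prop where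
  differentiableAt : ∀ u ∈ Set.Icc a b, DifferentiableAt ℝ f u
  continuousOn_deriv : ContinuousOn (deriv f) (Set.Icc a b)
  abs_le : ∀ u ∈ Set.Icc a b, |f u| ≤ S
  integral_abs_deriv_le : ∫ u in a..b, |deriv f u| ≤ V

namespace AmplitudeBound

variable {f g : ℝ → ℝ} {a b S V S' V' : ℝ}

lemma continuousOn (hf : AmplitudeBound f a b S V) : ContinuousOn f (Set.Icc a b) :=
  fun u hu => (hf.differentiableAt u hu).continuousAt.continuousWithinAt

lemma intervalIntegrable_deriv (hab : a ≤ b) (hf : AmplitudeBound f a b S V) :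
    IntervalIntegrable (deriv f) volume a b :=
  ContinuousOn.intervalIntegrable (Set.uIcc_of_le hab ▸ hf.continuousOn_deriv)

lemma mul (hab : a ≤ b) (hf : AmplitudeBound f a b S V) (hg : AmplitudeBound g a b S' V') :
    AmplitudeBound (fun u => f u * g u) a b (S * S') (S * V' + V * S') := by
  have hS : 0 ≤ S := (abs_nonneg _).trans (hf.abs_le a ⟨le_rfl, hab⟩)
  have hS' : 0 ≤ S' := (abs_nonneg _).trans (hg.abs_le a ⟨le_rfl, hab⟩)
  have hderiv : Set.EqOn (deriv fun u => f u * g u) (fun u => deriv f u * g u + f u * deriv g u)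
      (Set.Icc a b) := fun u hu =>
    ((hf.differentiableAt u hu).hasDerivAt.mul (hg.differentiableAt u hu).hasDerivAt).deriv
  have hcont : ContinuousOn (deriv fun u => f u * g u) (Set.Icc a b) :=
    ((hf.continuousOn_deriv.mul hg.continuousOn).add
      (hf.continuousOn.mul hg.continuousOn_deriv)).congr hderiv
  have hfint := (hf.intervalIntegrable_deriv hab).abs
  have hgint := (hg.intervalIntegrable_deriv hab).abs
  refine ⟨fun u hu => (hf.differentiableAt u hu).mul (hg.differentiableAt u hu), hcont,
    fun u hu => ?_, ?_⟩
  · rw [abs_mul]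
    exact mul_le_mul (hf.abs_le u hu) (hg.abs_le u hu) (abs_nonneg _) hS
  calc ∫ u in a..b, |deriv (fun u => f u * g u) u|
      ≤ ∫ u in a..b, (S * |deriv g u| + |deriv f u| * S') := by
        refine intervalIntegral.integral_mono_on hab
          (ContinuousOn.intervalIntegrable (Set.uIcc_of_le hab ▸ hcont.abs))
          ((hgint.const_mul S).add (hfint.mul_const S')) fun u hu => ?_
        rw [hderiv hu, add_comm (S * _)]
        refine (abs_add_le _ _).trans ?_
        rw [abs_mul, abs_mul]
        gcongr
        exacts [hg.abs_le u hu, hf.abs_le u hu]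
    _ = S * (∫ u in a..b, |deriv g u|) + (∫ u in a..b, |deriv f u|) * S' := by
        rw [intervalIntegral.integral_add (hgint.const_mul S) (hfint.mul_const S'),
          intervalIntegral.integral_const_mul, intervalIntegral.integral_mul_const]
    _ ≤ S * V' + V * S' := by
        gcongr
        exacts [hg.integral_abs_deriv_le, hf.integral_abs_deriv_le]

theorem norm_integral_smul_le {E : Type*} [NormedAddCommGroup E] [NormedSpace ℝ E]
    [CompleteSpace E] {e : ℝ → E} {M : ℝ} (hab : a ≤ b) (hf : AmplitudeBound f a b S V)
    (he : ContinuousOn e (Set.Icc a b)) (hM : ∀ u ∈ Set.Icc a b, ‖∫ v in a..u, e v‖ ≤ M) :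
    ‖∫ u in a..b, f u • e u‖ ≤ M * (S + V) := by
  have huIcc : Set.uIcc a b = Set.Icc a b := Set.uIcc_of_le hab
  have hM0 : 0 ≤ M := (norm_nonneg _).trans (hM a ⟨le_rfl, hab⟩)
  have heint : IntervalIntegrable e volume a b := ContinuousOn.intervalIntegrable (huIcc ▸ he)
  have hprim : ∀ u ∈ Set.Ioo (min a b) (max a b),
      HasDerivAt (fun u => ∫ v in a..u, e v) (e u) u := by
    intro u hu
    rw [min_eq_left hab, max_eq_right hab] at hu
    refine intervalIntegral.integral_hasDerivAt_right
      (heint.mono_set (Set.uIcc_subset_uIcc_left (huIcc ▸ Set.Ioo_subset_Icc_self hu)))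
      ((he.mono Set.Ioo_subset_Icc_self).stronglyMeasurableAtFilter isOpen_Ioo u hu)
      (he.continuousAt (Icc_mem_nhds hu.1 hu.2))
  have hparts := intervalIntegral.integral_smul_deriv_eq_deriv_smul_of_hasDerivAt
    (huIcc ▸ hf.continuousOn)
    (intervalIntegral.continuousOn_primitive_interval' heint Set.left_mem_uIcc)
    (fun u hu => (hf.differentiableAt u
      (Set.Ioo_subset_Icc_self (by rwa [min_eq_left hab, max_eq_right hab] at hu))).hasDerivAt)
    hprim (hf.intervalIntegrable_deriv hab) heint
  rw [intervalIntegral.integral_same, smul_zero, sub_zero] at hparts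
  have hremainder : ‖∫ u in a..b, deriv f u • ∫ v in a..u, e v‖ ≤ V * M := by
    refine (intervalIntegral.norm_integral_le_of_norm_le hab (.of_forall fun u hu => ?_)
      ((hf.intervalIntegrable_deriv hab).abs.mul_const M)).trans ?_
    · rw [norm_smul, Real.norm_eq_abs]
      exact mul_le_mul_of_nonneg_left (hM u (Set.Ioc_subset_Icc_self hu)) (abs_nonneg _)
    · rw [intervalIntegral.integral_mul_const]
      exact mul_le_mul_of_nonneg_right hf.integral_abs_deriv_le hM0
  calc ‖∫ u in a..b, f u • e u‖
      ≤ ‖f b • ∫ v in a..b, e v‖ + ‖∫ u in a..b, deriv f u • ∫ v in a..u, e v‖ :=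
        hparts ▸ norm_sub_le _ _
    _ ≤ S * M + V * M := by
        rw [norm_smul, Real.norm_eq_abs]
        refine add_le_add (mul_le_mul (hf.abs_le b ⟨hab, le_rfl⟩) (hM b ⟨hab, le_rfl⟩)
          (norm_nonneg _) ?_) hremainder
        exact (abs_nonneg _).trans (hf.abs_le b ⟨hab, le_rfl⟩)
    _ = M * (S + V) := by ring

theorem norm_integral_smul_cexp_le {h h' h'' : ℝ → ℝ} {δ : ℝ} (hab : a ≤ b) (hδ : 0 < δ)
    (hf : AmplitudeBound f a b S V) (hh : ∀ u ∈ Set.Icc a b, HasDerivAt h (h' u) u)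
    (hh' : ∀ u ∈ Set.Icc a b, HasDerivAt h' (h'' u) u) (hcont : ContinuousOn h'' (Set.Icc a b))
    (hle : ∀ u ∈ Set.Icc a b, δ ≤ h'' u) :
    ‖∫ u in a..b, f u • cexp (I * h u)‖ ≤ 8 / √δ * (S + V) := by
  have hc : ContinuousOn h (Set.Icc a b) := fun u hu => (hh u hu).continuousAt.continuousWithinAt
  refine hf.norm_integral_smul_le hab (by fun_prop) fun u hu => ?_
  have hsub : Set.Icc a u ⊆ Set.Icc a b := Set.Icc_subset_Icc_right hu.2
  exact norm_integral_cexp_le_of_le_second_deriv hu.1 hδ (fun v hv => hh v (hsub hv))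
    (fun v hv => hh' v (hsub hv)) (hcont.mono hsub) fun v hv => hle v (hsub hv)

variable {f' φ : ℝ → ℝ} {P : ℝ}

lemma comp_of_deriv_nonneg (hab : a ≤ b) (hφ : ContDiff ℝ 1 φ) (hφ' : Integrable (deriv φ))
    (hS : ∀ x, |φ x| ≤ S) (hf : ∀ u ∈ Set.Icc a b, HasDerivAt f (f' u) u)
    (hcont : ContinuousOn f' (Set.Icc a b)) (hnonneg : ∀ u ∈ Set.Icc a b, 0 ≤ f' u) :
    AmplitudeBound (fun u => φ (f u)) a b S (∫ x, |deriv φ x|) := by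
  have huIcc : Set.uIcc a b = Set.Icc a b := Set.uIcc_of_le hab
  have hfcont : ContinuousOn f (Set.Icc a b) :=
    fun u hu => (hf u hu).continuousAt.continuousWithinAt
  have hφcont : Continuous (deriv φ) := hφ.continuous_deriv le_rfl
  have hderiv : ∀ u ∈ Set.Icc a b, HasDerivAt (fun u => φ (f u)) (deriv φ (f u) * f' u) u :=
    fun u hu => (hφ.differentiable one_ne_zero (f u)).hasDerivAt.comp u (hf u hu)
  have hmono : f a ≤ f b := by
    rw [← sub_nonneg, ← intervalIntegral.integral_eq_sub_of_hasDerivAt (huIcc ▸ hf)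
      (ContinuousOn.intervalIntegrable (huIcc ▸ hcont))]
    exact intervalIntegral.integral_nonneg hab hnonneg
  refine ⟨fun u hu => (hderiv u hu).differentiableAt,
    ((hφcont.comp_continuousOn hfcont).mul hcont).congr fun u hu => (hderiv u hu).deriv,
    fun u _ => hS _, ?_⟩
  calc ∫ u in a..b, |deriv (fun u => φ (f u)) u|
      = ∫ u in a..b, ((fun x => |deriv φ x|) ∘ f) u * f' u := by
        refine intervalIntegral.integral_congr fun u hu => ?_
        rw [huIcc] at hu
        simp only [(hderiv u hu).deriv, abs_mul, abs_of_nonneg (hnonneg u hu), Function.comp_apply]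
    _ = ∫ x in f a..f b, |deriv φ x| :=
        intervalIntegral.integral_comp_mul_deriv (huIcc ▸ hf) (huIcc ▸ hcont) hφcont.abs
    _ ≤ ∫ x, |deriv φ x| := by
        rw [intervalIntegral.integral_of_le hmono]
        exact setIntegral_le_integral hφ'.abs (.of_forall fun _ => abs_nonneg _)

lemma of_deriv_nonneg (hab : a ≤ b) (hf : ∀ u ∈ Set.Icc a b, HasDerivAt f (f' u) u)
    (hcont : ContinuousOn f' (Set.Icc a b)) (hnonneg : ∀ u ∈ Set.Icc a b, 0 ≤ f' u)
    (hmem : ∀ u ∈ Set.Icc a b, f u ∈ Set.Icc 0 P) : AmplitudeBound f a b P P := by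
  have huIcc : Set.uIcc a b = Set.Icc a b := Set.uIcc_of_le hab
  refine ⟨fun u hu => (hf u hu).differentiableAt, hcont.congr fun u hu => (hf u hu).deriv,
    fun u hu => (abs_of_nonneg (hmem u hu).1).trans_le (hmem u hu).2, ?_⟩
  calc ∫ u in a..b, |deriv f u| = ∫ u in a..b, f' u := by
        refine intervalIntegral.integral_congr fun u hu => ?_
        rw [huIcc] at hu
        simp only [(hf u hu).deriv, abs_of_nonneg (hnonneg u hu)]
    _ = f b - f a := intervalIntegral.integral_eq_sub_of_hasDerivAt (huIcc ▸ hf)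
        (ContinuousOn.intervalIntegrable (huIcc ▸ hcont))
    _ ≤ P := by linarith [(hmem a ⟨le_rfl, hab⟩).1, (hmem b ⟨hab, le_rfl⟩).2]

end AmplitudeBound

/-! ### Cut-off functions -/

/-- The properties of a cut-off function that the dispersive estimate relies on: `IsCutoff` with
only one continuous derivative. -/
structure IsC1Cutoff (ψ : ℝ → ℝ) : Prop where
  contDiff : ContDiff ℝ 1 ψ
  mem_Icc : ∀ x, ψ x ∈ Set.Icc (0 : ℝ) 1
  eq_one : ∀ x ≤ (1 : ℝ), ψ x = 1
  eq_zero : ∀ x, (2 : ℝ) ≤ x → ψ x = 0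

lemma IsCutoff.isC1Cutoff {ψ : ℝ → ℝ} (hψ : IsCutoff ψ) : IsC1Cutoff ψ :=
  ⟨hψ.1.of_le (by exact_mod_cast le_top), hψ.2.1, hψ.2.2.1, hψ.2.2.2⟩

namespace IsC1Cutoff

variable {ψ : ℝ → ℝ}

lemma continuous (hψ : IsC1Cutoff ψ) : Continuous ψ := hψ.contDiff.continuous

lemma abs_le_one (hψ : IsC1Cutoff ψ) (x : ℝ) : |ψ x| ≤ 1 :=
  abs_le.2 ⟨by linarith [(hψ.mem_Icc x).1], (hψ.mem_Icc x).2⟩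

lemma abs_one_sub_le_one (hψ : IsC1Cutoff ψ) (x : ℝ) : |1 - ψ x| ≤ 1 :=
  abs_le.2 ⟨by linarith [(hψ.mem_Icc x).2], by linarith [(hψ.mem_Icc x).1]⟩

lemma integrable_deriv (hψ : IsC1Cutoff ψ) : Integrable (deriv ψ) := by
  refine (hψ.contDiff.continuous_deriv le_rfl).integrable_of_hasCompactSupport
    (HasCompactSupport.intro (isCompact_Icc (a := (1 : ℝ)) (b := 2)) fun x hx => ?_)
  rcases not_and_or.1 hx with hx | hx
  · have : ψ =ᶠ[nhds x] fun _ => 1 :=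
      (eventually_lt_nhds (not_le.1 hx)).mono fun y hy => hψ.eq_one y hy.le
    rw [this.deriv_eq, deriv_const]
  · have : ψ =ᶠ[nhds x] fun _ => 0 :=
      (eventually_gt_nhds (not_le.1 hx)).mono fun y hy => hψ.eq_zero y (le_of_lt hy)
    rw [this.deriv_eq, deriv_const]

lemma amplitudeBound_comp (hψ : IsC1Cutoff ψ) {f f' : ℝ → ℝ} {a b : ℝ} (hab : a ≤ b)
    (hf : ∀ u ∈ Set.Icc a b, HasDerivAt f (f' u) u) (hcont : ContinuousOn f' (Set.Icc a b))
    (hnonneg : ∀ u ∈ Set.Icc a b, 0 ≤ f' u) :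
    AmplitudeBound (fun u => ψ (f u)) a b 1 (∫ x, |deriv ψ x|) :=
  .comp_of_deriv_nonneg hab hψ.contDiff hψ.integrable_deriv hψ.abs_le_one hf hcont hnonneg

lemma amplitudeBound_one_sub_comp (hψ : IsC1Cutoff ψ) {f f' : ℝ → ℝ} {a b : ℝ} (hab : a ≤ b)
    (hf : ∀ u ∈ Set.Icc a b, HasDerivAt f (f' u) u) (hcont : ContinuousOn f' (Set.Icc a b))
    (hnonneg : ∀ u ∈ Set.Icc a b, 0 ≤ f' u) :
    AmplitudeBound (fun u => 1 - ψ (f u)) a b 1 (∫ x, |deriv ψ x|) := by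
  have hderiv : deriv (fun x => 1 - ψ x) = fun x => -deriv ψ x := by
    ext x
    exact deriv_const_sub 1
  have := AmplitudeBound.comp_of_deriv_nonneg (φ := fun x => 1 - ψ x) hab
    (contDiff_const.sub hψ.contDiff) (hderiv ▸ hψ.integrable_deriv.neg) hψ.abs_one_sub_le_one
    hf hcont hnonneg
  simpa only [hderiv, abs_neg] using this

end IsC1Cutoff

/-! ### Distances along a line -/

section PlanarNorm

/-- The Euclidean length of the planar vector `(x, y)`. -/
def planarNorm (x y : ℝ) : ℝ := √(x ^ 2 + y ^ 2)

lemma planarNorm_nonneg (x y : ℝ) : 0 ≤ planarNorm x y := Real.sqrt_nonneg _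

lemma planarNorm_sq (x y : ℝ) : planarNorm x y ^ 2 = x ^ 2 + y ^ 2 := Real.sq_sqrt (by positivity)

lemma planarNorm_pos_of_left {x : ℝ} (hx : 0 < x) (y : ℝ) : 0 < planarNorm x y :=
  Real.sqrt_pos.2 (by positivity)

lemma planarNorm_le_add {x y : ℝ} (hx : 0 ≤ x) (hy : 0 ≤ y) : planarNorm x y ≤ x + y :=
  Real.sqrt_le_iff.2 ⟨by positivity, by nlinarith [mul_nonneg hx hy]⟩

@[fun_prop]
lemma continuous_planarNorm {X : Type*} [TopologicalSpace X] {f g : X → ℝ} (hf : Continuous f)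
    (hg : Continuous g) : Continuous fun x => planarNorm (f x) (g x) := by
  unfold planarNorm
  fun_prop

variable {x₀ x₁ y₀ y₁ u : ℝ}

lemma hasDerivAt_planarNorm_line (hpos : 0 < planarNorm (x₀ + x₁ * u) (y₀ + y₁ * u)) :
    HasDerivAt (fun u => planarNorm (x₀ + x₁ * u) (y₀ + y₁ * u))
      ((x₁ * (x₀ + x₁ * u) + y₁ * (y₀ + y₁ * u)) / planarNorm (x₀ + x₁ * u) (y₀ + y₁ * u)) u := by
  have hx : HasDerivAt (fun u : ℝ => x₀ + x₁ * u) x₁ u := by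
    simpa using ((hasDerivAt_id u).const_mul x₁).const_add x₀
  have hy : HasDerivAt (fun u : ℝ => y₀ + y₁ * u) y₁ u := by
    simpa using ((hasDerivAt_id u).const_mul y₁).const_add y₀
  convert! ((hx.pow 2).add (hy.pow 2)).sqrt (Real.sqrt_pos.1 hpos).ne' using 1
  simp only [Pi.add_apply, Pi.pow_apply, planarNorm, Nat.cast_ofNat, Nat.add_one_sub_one, pow_one]
  rw [← mul_div_mul_left _ _ two_ne_zero]
  congr 1
  ring

/-- The numerator is the squared cross product of position and velocity, which is constant along
the line. -/
lemma hasDerivAt_deriv_planarNorm_line (hpos : 0 < planarNorm (x₀ + x₁ * u) (y₀ + y₁ * u)) :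
    HasDerivAt (fun u => (x₁ * (x₀ + x₁ * u) + y₁ * (y₀ + y₁ * u)) /
        planarNorm (x₀ + x₁ * u) (y₀ + y₁ * u))
      ((x₁ * y₀ - y₁ * x₀) ^ 2 / planarNorm (x₀ + x₁ * u) (y₀ + y₁ * u) ^ 3) u := by
  have hx : HasDerivAt (fun u : ℝ => x₀ + x₁ * u) x₁ u := by
    simpa using ((hasDerivAt_id u).const_mul x₁).const_add x₀
  have hy : HasDerivAt (fun u : ℝ => y₀ + y₁ * u) y₁ u := by
    simpa using ((hasDerivAt_id u).const_mul y₁).const_add y₀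
  have hne := hpos.ne'
  convert! ((hx.const_mul x₁).add (hy.const_mul y₁)).div
    (hasDerivAt_planarNorm_line hpos) hne using 1
  simp only [Pi.add_apply]
  field_simp
  rw [planarNorm_sq]
  ring

end PlanarNorm

/-! ### The phase in cylindrical coordinates -/

section Phase

variable {γ ρ z s : ℝ}

/-- In cylindrical coordinates, `√(1 + γ²|ξ|² + 2γξ₃)` is `γ` times the distance from `ξ` to the
focus `(0, 0, -1/γ)`; replacing `z` by `-z` gives the other focus. -/
def focalDist (γ ρ z : ℝ) : ℝ := planarNorm (γ * ρ) (1 + γ * z)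

/-- The phase `(|γξ - e₃| + s |γξ + e₃|) / 2` in cylindrical coordinates. -/
def phase (γ s ρ z : ℝ) : ℝ := (focalDist γ ρ (-z) + s * focalDist γ ρ z) / 2

lemma focalDist_pos (hγ : 0 < γ) (hρ : 0 < ρ) (z : ℝ) : 0 < focalDist γ ρ z :=
  planarNorm_pos_of_left (mul_pos hγ hρ) _

lemma focalDist_sq_sub_sq (γ ρ z : ℝ) :
    focalDist γ ρ z ^ 2 - focalDist γ ρ (-z) ^ 2 = 4 * γ * z := by
  rw [focalDist, focalDist, planarNorm_sq, planarNorm_sq]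
  ring

lemma focalDist_neg_le (hγ : 0 < γ) (hz : 0 ≤ z) : focalDist γ ρ (-z) ≤ focalDist γ ρ z := by
  refine le_of_sq_le_sq ?_ (planarNorm_nonneg _ _)
  linarith [focalDist_sq_sub_sq γ ρ z, mul_nonneg hγ.le hz]

lemma focalDist_le (hγ : 0 < γ) (hρ : 0 ≤ ρ) (hz : 0 ≤ z) : focalDist γ ρ z ≤ 1 + γ * (ρ + z) := by
  calc focalDist γ ρ z ≤ γ * ρ + (1 + γ * z) := planarNorm_le_add (by positivity) (by positivity)
    _ = 1 + γ * (ρ + z) := by ring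

lemma focalDist_inv_cube_sub_ge (hγ : 0 < γ) (hρ : 0 < ρ) (hz : 0 ≤ z) :
    2 * γ * z / focalDist γ ρ z ^ 5 ≤ 1 / focalDist γ ρ (-z) ^ 3 - 1 / focalDist γ ρ z ^ 3 := by
  have ha := focalDist_pos hγ hρ z
  have hb := focalDist_pos hγ hρ (-z)
  have hba := focalDist_neg_le (ρ := ρ) hγ hz
  have hsq := focalDist_sq_sub_sq γ ρ z
  set a := focalDist γ ρ z
  set b := focalDist γ ρ (-z)
  have hnum : 2 * γ * z = (a - b) * (a + b) / 2 := by linear_combination -hsq / 2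
  have hcube : b ^ 3 * (a + b) ≤ 2 * a ^ 2 * (a ^ 2 + a * b + b ^ 2) := by
    nlinarith [pow_le_pow_left₀ hb.le hba 3, pow_pos ha 4, mul_pos ha hb,
      mul_le_mul (pow_le_pow_left₀ hb.le hba 3) (add_le_add_right hba a) (by positivity)
        (by positivity), mul_pos (pow_pos ha 3) hb, mul_pos (pow_pos ha 2) (pow_pos hb 2)]
  rw [div_sub_div _ _ (by positivity) (by positivity), div_le_div_iff₀ (by positivity)
    (by positivity), hnum]
  have := mul_le_mul_of_nonneg_left hcube (mul_nonneg (sub_nonneg.2 hba) (pow_nonneg ha.le 3))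
  linarith

/-- The second derivative of `u ↦ phase γ s (c + α * u) u`. -/
def phaseLineDeriv₂ (γ s c α u : ℝ) : ℝ :=
  ((γ * (γ * c + α)) ^ 2 / focalDist γ (c + α * u) (-u) ^ 3 +
    s * ((γ * (γ * c - α)) ^ 2 / focalDist γ (c + α * u) u ^ 3)) / 2

variable {S : Set ℝ} {c α : ℝ}

lemma exists_hasDerivAt_focalDist_line (hγ : 0 < γ) (hpos : ∀ u ∈ S, 0 < c + α * u) (σ : ℝ) :
    ∃ d : ℝ → ℝ, (∀ u ∈ S, HasDerivAt (fun u => focalDist γ (c + α * u) (σ * u)) (d u) u) ∧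
      ∀ u ∈ S, HasDerivAt d
        ((γ * (γ * σ * c - α)) ^ 2 / focalDist γ (c + α * u) (σ * u) ^ 3) u := by
  have hline : ∀ u, focalDist γ (c + α * u) (σ * u) =
      planarNorm (γ * c + γ * α * u) (1 + γ * σ * u) := fun u => by
    rw [focalDist, mul_add, mul_assoc γ α, mul_assoc γ σ]
  have hnorm : ∀ u ∈ S, 0 < planarNorm (γ * c + γ * α * u) (1 + γ * σ * u) := fun u hu =>
    hline u ▸ focalDist_pos hγ (hpos u hu) _
  simp only [hline]
  refine ⟨_, fun u hu => hasDerivAt_planarNorm_line (hnorm u hu), fun u hu => ?_⟩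
  convert! hasDerivAt_deriv_planarNorm_line (hnorm u hu) using 2
  ring

lemma exists_hasDerivAt_phase_line (hγ : 0 < γ) (hpos : ∀ u ∈ S, 0 < c + α * u) (s : ℝ) :
    ∃ d : ℝ → ℝ, (∀ u ∈ S, HasDerivAt (fun u => phase γ s (c + α * u) u) (d u) u) ∧
      ∀ u ∈ S, HasDerivAt d (phaseLineDeriv₂ γ s c α u) u := by
  obtain ⟨d₁, hd₁, hd₁'⟩ := exists_hasDerivAt_focalDist_line hγ hpos 1
  obtain ⟨d₂, hd₂, hd₂'⟩ := exists_hasDerivAt_focalDist_line hγ hpos (-1)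
  simp only [one_mul, neg_one_mul, mul_one, mul_neg] at hd₁ hd₁' hd₂ hd₂'
  refine ⟨fun u => (d₂ u + s * d₁ u) / 2,
    fun u hu => ((hd₂ u hu).add ((hd₁ u hu).const_mul s)).div_const 2, fun u hu => ?_⟩
  convert! ((hd₂' u hu).add ((hd₁' u hu).const_mul s)).div_const 2 using 1
  rw [phaseLineDeriv₂]
  ring

@[fun_prop]
lemma continuous_focalDist {X : Type*} [TopologicalSpace X] {f g : X → ℝ} (γ : ℝ)
    (hf : Continuous f) (hg : Continuous g) : Continuous fun x => focalDist γ (f x) (g x) := by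
  unfold focalDist
  fun_prop

@[fun_prop]
lemma continuous_phase {X : Type*} [TopologicalSpace X] {f g : X → ℝ} (γ s : ℝ)
    (hf : Continuous f) (hg : Continuous g) : Continuous fun x => phase γ s (f x) (g x) := by
  unfold phase
  fun_prop

lemma continuousOn_phaseLineDeriv₂ (hγ : 0 < γ) (hpos : ∀ u ∈ S, 0 < c + α * u) (s : ℝ) :
    ContinuousOn (phaseLineDeriv₂ γ s c α) S := by
  have hne : ∀ f : ℝ → ℝ, ∀ u ∈ S, focalDist γ (c + α * u) (f u) ^ 3 ≠ 0 := fun f u hu =>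
    (pow_pos (focalDist_pos hγ (hpos u hu) _) 3).ne'
  unfold phaseLineDeriv₂
  refine ((ContinuousOn.div continuousOn_const (Continuous.continuousOn ?_) (hne _)).add
    (continuousOn_const.mul (ContinuousOn.div continuousOn_const
      (Continuous.continuousOn ?_) (hne _)))).div_const 2
  all_goals fun_prop

lemma phaseLineDeriv₂_ge (hγ : 0 < γ) (hs : -1 ≤ s) {u : ℝ} (hu : 0 < c + α * u) :
    ((γ * (γ * c + α)) ^ 2 / focalDist γ (c + α * u) (-u) ^ 3 -
      (γ * (γ * c - α)) ^ 2 / focalDist γ (c + α * u) u ^ 3) / 2 ≤ phaseLineDeriv₂ γ s c α u := by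
  have ha := focalDist_pos hγ hu u
  have : 0 ≤ (γ * (γ * c - α)) ^ 2 / focalDist γ (c + α * u) u ^ 3 := by positivity
  rw [phaseLineDeriv₂]
  nlinarith

lemma phaseLineDeriv₂_vertical_ge (hγ : 0 < γ) (hs : -1 ≤ s) (hρ : 0 < ρ) (hz : 0 ≤ z) :
    γ ^ 5 * ρ ^ 2 * z / focalDist γ ρ z ^ 5 ≤ phaseLineDeriv₂ γ s ρ 0 z := by
  have hge := phaseLineDeriv₂_ge (α := 0) (u := z) hγ hs (c := ρ) (by simpa using hρ)
  simp only [zero_mul, add_zero, sub_zero] at hge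
  calc γ ^ 5 * ρ ^ 2 * z / focalDist γ ρ z ^ 5
      = (γ * (γ * ρ)) ^ 2 / 2 * (2 * γ * z / focalDist γ ρ z ^ 5) := by ring
    _ ≤ (γ * (γ * ρ)) ^ 2 / 2 * (1 / focalDist γ ρ (-z) ^ 3 - 1 / focalDist γ ρ z ^ 3) := by
        gcongr
        exact focalDist_inv_cube_sub_ge hγ hρ hz
    _ ≤ phaseLineDeriv₂ γ s ρ 0 z := hge.trans_eq' (by ring)

lemma phaseLineDeriv₂_diagonal_ge (hγ : 0 < γ) (hs : -1 ≤ s) {w u : ℝ} (hwu : 0 < w + u)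
    (hu : 0 ≤ u) :
    2 * γ ^ 3 * w / focalDist γ (w + u) u ^ 3 ≤ phaseLineDeriv₂ γ s w 1 u := by
  have hge := phaseLineDeriv₂_ge (α := 1) (u := u) hγ hs (c := w) (by simpa using hwu)
  simp only [one_mul] at hge
  have hb := focalDist_pos hγ hwu (-u)
  have hba := focalDist_neg_le (ρ := w + u) hγ hu
  calc 2 * γ ^ 3 * w / focalDist γ (w + u) u ^ 3
      = ((γ * (γ * w + 1)) ^ 2 / focalDist γ (w + u) u ^ 3 -
          (γ * (γ * w - 1)) ^ 2 / focalDist γ (w + u) u ^ 3) / 2 := by ring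
    _ ≤ ((γ * (γ * w + 1)) ^ 2 / focalDist γ (w + u) (-u) ^ 3 -
          (γ * (γ * w - 1)) ^ 2 / focalDist γ (w + u) u ^ 3) / 2 := by gcongr
    _ ≤ phaseLineDeriv₂ γ s w 1 u := hge

end Phase

/-! ### Oscillatory integrals along vertical and diagonal lines -/

section Sections

variable {ψ : ℝ → ℝ} {γ r R s τ p q : ℝ}

/-- The cut-off `Ψ_{r,R}` on the half space `ξ₃ > 0` in cylindrical coordinates, multiplied by the
Jacobian `ρ`. -/
def amplitude (ψ : ℝ → ℝ) (r R ρ z : ℝ) : ℝ :=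
  ψ (planarNorm ρ z / R) * (1 - ψ (ρ / r)) * (1 - ψ (z / r)) * ρ

/-- The oscillatory integrand on a half plane `{θ = const}`; the linear part `p ρ + q z` of the
phase is the contribution of the Fourier character. -/
def oscIntegrand (ψ : ℝ → ℝ) (γ r R s τ p q ρ z : ℝ) : ℂ :=
  amplitude ψ r R ρ z • cexp (I * ((τ * phase γ s ρ z + p * ρ + q * z : ℝ) : ℂ))

/-- The constant in the lower bound for the curvature of the phase along vertical and diagonal
lines; it is what remains of `γ` after bounding `focalDist γ ρ z` by `(6 * γ + 1) * R`. -/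
def curvatureConst (γ : ℝ) : ℝ := γ / (6 * γ + 1)

/-- The bound for the integral of `oscIntegrand` over a vertical or diagonal segment. -/
def sectionBound (ψ : ℝ → ℝ) (γ r R τ : ℝ) : ℝ :=
  8 * (3 * (∫ x, |deriv ψ x|) + 2) * R ^ 2 / √(curvatureConst γ ^ 5 * τ * r)

lemma curvatureConst_pos (hγ : 0 < γ) : 0 < curvatureConst γ := by
  unfold curvatureConst
  positivity

lemma sectionBound_nonneg (ψ : ℝ → ℝ) (γ r R τ : ℝ) : 0 ≤ sectionBound ψ γ r R τ := by
  have : 0 ≤ ∫ x, |deriv ψ x| := integral_nonneg fun _ => abs_nonneg _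
  unfold sectionBound
  positivity

lemma amplitudeBound_amplitude_line (hψ : IsC1Cutoff ψ) (hr : 0 < r) (hR : 0 < R)
    {a b c α P : ℝ} (ha : 0 ≤ a) (hab : a ≤ b) (hα : 0 ≤ α)
    (hmem : ∀ u ∈ Set.Icc a b, c + α * u ∈ Set.Ioc 0 P) :
    AmplitudeBound (fun u => amplitude ψ r R (c + α * u) u) a b P
      (P * (3 * (∫ x, |deriv ψ x|) + 1)) := by
  have hline : ∀ u, HasDerivAt (fun u => c + α * u) α u := fun u => by
    simpa using ((hasDerivAt_id u).const_mul α).const_add c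
  have hnorm_pos : ∀ u ∈ Set.Icc a b, 0 < planarNorm (c + α * u) u := fun u hu =>
    planarNorm_pos_of_left (hmem u hu).1 u
  have hnorm : ∀ u ∈ Set.Icc a b, HasDerivAt (fun u => planarNorm (c + α * u) u)
      ((α * (c + α * u) + u) / planarNorm (c + α * u) u) u := fun u hu => by
    simpa using hasDerivAt_planarNorm_line (x₀ := c) (x₁ := α) (y₀ := 0) (y₁ := 1) (u := u)
      (by simpa using hnorm_pos u hu)
  have hradial := hψ.amplitudeBound_comp hab (fun u hu => (hnorm u hu).div_const R)
    ((ContinuousOn.div (by fun_prop) (by fun_prop) fun u hu => (hnorm_pos u hu).ne').div_const R)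
    fun u hu => by
      have := (hmem u hu).1
      have := ha.trans hu.1
      have := hnorm_pos u hu
      positivity
  have hhorizontal := hψ.amplitudeBound_one_sub_comp hab (fun u _ => (hline u).div_const r)
    continuousOn_const fun _ _ => div_nonneg hα hr.le
  have hvertical := hψ.amplitudeBound_one_sub_comp hab (fun u _ => (hasDerivAt_id u).div_const r)
    continuousOn_const fun _ _ => by positivity
  have hjacobian := AmplitudeBound.of_deriv_nonneg hab (fun u _ => hline u) continuousOn_const
    (fun _ _ => hα) fun u hu => Set.Ioc_subset_Icc_self (hmem u hu)
  convert ((hradial.mul hab hhorizontal).mul hab hvertical).mul hab hjacobian using 1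
  · rfl
  all_goals ring

theorem norm_integral_oscIntegrand_line_le (hψ : IsC1Cutoff ψ) (hγ : 0 < γ) (hr : 0 < r)
    (hR : 0 < R) (hτ : 0 < τ) {a b c α P : ℝ} (ha : 0 ≤ a) (hab : a ≤ b) (hα : 0 ≤ α)
    (hmem : ∀ u ∈ Set.Icc a b, c + α * u ∈ Set.Ioc 0 P)
    (hcurv : ∀ u ∈ Set.Icc a b,
      curvatureConst γ ^ 5 * r * P ^ 2 / R ^ 4 ≤ phaseLineDeriv₂ γ s c α u) :
    ‖∫ u in a..b, oscIntegrand ψ γ r R s τ p q (c + α * u) u‖ ≤ sectionBound ψ γ r R τ := by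
  have hpos : ∀ u ∈ Set.Icc a b, 0 < c + α * u := fun u hu => (hmem u hu).1
  have hP : 0 < P := (hpos a ⟨le_rfl, hab⟩).trans_le (hmem a ⟨le_rfl, hab⟩).2
  have hκ := curvatureConst_pos hγ
  obtain ⟨d, hd, hd'⟩ := exists_hasDerivAt_phase_line hγ hpos s
  have hlinear : ∀ u, HasDerivAt (fun u => p * (c + α * u)) (p * α) u := fun u => by
    simpa using (((hasDerivAt_id u).const_mul α).const_add c).const_mul p
  have hphase : ∀ u ∈ Set.Icc a b,
      HasDerivAt (fun u => τ * phase γ s (c + α * u) u + p * (c + α * u) + q * u)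
        (τ * d u + p * α + q) u := fun u hu =>
    (((hd u hu).const_mul τ).add (hlinear u)).add (by simpa using (hasDerivAt_id u).const_mul q)
  have hphase' : ∀ u ∈ Set.Icc a b, HasDerivAt (fun u => τ * d u + p * α + q)
      (τ * phaseLineDeriv₂ γ s c α u) u := fun u hu =>
    (((hd' u hu).const_mul τ).add_const _).add_const _
  have hbound := (amplitudeBound_amplitude_line hψ hr hR ha hab hα
    hmem).norm_integral_smul_cexp_le (δ := τ * (curvatureConst γ ^ 5 * r * P ^ 2 / R ^ 4)) hab
      (by positivity) hphase hphase'
      (continuousOn_const.mul (continuousOn_phaseLineDeriv₂ hγ hpos s))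
      fun u hu => mul_le_mul_of_nonneg_left (hcurv u hu) hτ.le
  have hsqrt : √(τ * (curvatureConst γ ^ 5 * r * P ^ 2 / R ^ 4)) =
      √(curvatureConst γ ^ 5 * τ * r) * (P / R ^ 2) := by
    rw [← Real.sqrt_sq (show 0 ≤ P / R ^ 2 by positivity), ← Real.sqrt_mul (by positivity)]
    congr 1
    ring
  refine hbound.trans_eq ?_
  have : √(curvatureConst γ ^ 5 * τ * r) ≠ 0 := by positivity
  rw [hsqrt, sectionBound]
  field_simp
  ring

lemma mul_focalDist_le (hγ : 0 < γ) (hr : 0 ≤ r) (hr1 : r ≤ 1) {ρ z m : ℝ} (hρ : 0 ≤ ρ)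
    (hz : 0 ≤ z) (hrm : r ≤ m) (hm : ρ + z ≤ 6 * m) :
    r * focalDist γ ρ z ≤ (6 * γ + 1) * m := by
  have hm0 : 0 ≤ m := hr.trans hrm
  calc r * focalDist γ ρ z ≤ r * (1 + γ * (6 * m)) := by
        gcongr
        exact (focalDist_le hγ hρ hz).trans (by gcongr)
    _ = r + r * (6 * γ * m) := by ring
    _ ≤ m + 1 * (6 * γ * m) := by gcongr
    _ = (6 * γ + 1) * m := by ring

lemma div_le_div_focalDist (hγ : 0 < γ) (hr : 0 ≤ r) (hr1 : r ≤ 1) {ρ z m : ℝ} (hρ : 0 < ρ)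
    (hz : 0 ≤ z) (hrm : r ≤ m) (hm : ρ + z ≤ 6 * m) :
    r / (6 * γ + 1) ≤ m / focalDist γ ρ z := by
  rw [div_le_div_iff₀ (by positivity) (focalDist_pos hγ hρ z), mul_comm m]
  exact mul_focalDist_le hγ hr hr1 hρ.le hz hrm hm

lemma inv_le_inv_focalDist (hγ : 0 < γ) (hR : 1 ≤ R) {ρ z : ℝ} (hρ : 0 < ρ) (hz : 0 ≤ z)
    (hm : ρ + z ≤ 6 * R) : ((6 * γ + 1) * R)⁻¹ ≤ (focalDist γ ρ z)⁻¹ := by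
  have := focalDist_pos hγ hρ z
  gcongr
  simpa using mul_focalDist_le hγ zero_le_one le_rfl hρ.le hz hR hm

lemma curvatureConst_le_phaseLineDeriv₂_vertical (hγ : 0 < γ) (hs : -1 ≤ s) (hr : 0 ≤ r)
    (hr1 : r ≤ 1) (hR : 1 ≤ R) {ρ z : ℝ} (hρ : 0 < ρ) (hρz : ρ ≤ 2 * z) (hrz : r ≤ z)
    (hzR : z ≤ 2 * R) :
    curvatureConst γ ^ 5 * r * ρ ^ 2 / R ^ 4 ≤ phaseLineDeriv₂ γ s ρ 0 z := by
  have hz : 0 ≤ z := hr.trans hrz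
  have hfocal := focalDist_pos hγ hρ z
  have hinv := inv_le_inv_focalDist hγ hR hρ hz (by linarith)
  have hdiv := div_le_div_focalDist hγ hr hr1 hρ hz hrz (by linarith)
  calc curvatureConst γ ^ 5 * r * ρ ^ 2 / R ^ 4
      = γ ^ 5 * ρ ^ 2 * (r / (6 * γ + 1)) * ((6 * γ + 1) * R)⁻¹ ^ 4 := by
        rw [curvatureConst]
        field_simp
    _ ≤ γ ^ 5 * ρ ^ 2 * (z / focalDist γ ρ z) * (focalDist γ ρ z)⁻¹ ^ 4 := by
        gcongr
    _ = γ ^ 5 * ρ ^ 2 * z / focalDist γ ρ z ^ 5 := by field_simp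
    _ ≤ phaseLineDeriv₂ γ s ρ 0 z := phaseLineDeriv₂_vertical_ge hγ hs hρ hz

lemma curvatureConst_le_phaseLineDeriv₂_diagonal (hγ : 0 < γ) (hs : -1 ≤ s) (hr : 0 < r)
    (hr1 : r ≤ 1) (hR : 1 ≤ R) {w u : ℝ} (hru : r ≤ u) (huw : u ≤ w) (hwR : w ≤ 2 * R) :
    curvatureConst γ ^ 5 * r * (4 * R) ^ 2 / R ^ 4 ≤ phaseLineDeriv₂ γ s w 1 u := by
  have hu : 0 < u := hr.trans_le hru
  have hw : 0 < w := hu.trans_le huw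
  have hwu : 0 < w + u := by linarith
  have hκ : curvatureConst γ ≤ 1 / 6 := by
    rw [curvatureConst, div_le_div_iff₀ (by positivity) (by norm_num)]
    linarith
  have hκ0 := curvatureConst_pos hγ
  have hfocal := focalDist_pos hγ hwu u
  have hinv := inv_le_inv_focalDist hγ hR hwu hu.le (by linarith)
  have hdiv := div_le_div_focalDist hγ hr.le hr1 hwu hu.le (hru.trans huw) (by linarith)
  calc curvatureConst γ ^ 5 * r * (4 * R) ^ 2 / R ^ 4
      = 16 * curvatureConst γ ^ 2 * (curvatureConst γ ^ 3 * r / R ^ 2) := by field_simp; ring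
    _ ≤ 16 * (1 / 6) ^ 2 * (curvatureConst γ ^ 3 * r / R ^ 2) := by gcongr
    _ ≤ 2 * (curvatureConst γ ^ 3 * r / R ^ 2) := by gcongr; norm_num
    _ = 2 * γ ^ 3 * (r / (6 * γ + 1)) * ((6 * γ + 1) * R)⁻¹ ^ 2 := by
        rw [curvatureConst]
        field_simp
    _ ≤ 2 * γ ^ 3 * (w / focalDist γ (w + u) u) * (focalDist γ (w + u) u)⁻¹ ^ 2 := by
        gcongr
    _ = 2 * γ ^ 3 * w / focalDist γ (w + u) u ^ 3 := by field_simp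
    _ ≤ phaseLineDeriv₂ γ s w 1 u := phaseLineDeriv₂_diagonal_ge hγ hs hwu hu.le

lemma norm_integral_oscIntegrand_vertical_le (hψ : IsC1Cutoff ψ) (hγ : 0 < γ) (hs : -1 ≤ s)
    (hr : 0 < r) (hr1 : r ≤ 1) (hR : 1 ≤ R) (hτ : 0 < τ) {ρ : ℝ} (hρ : 0 < ρ) (hρR : ρ ≤ 2 * R) :
    ‖∫ z in max (ρ / 2) r..2 * R, oscIntegrand ψ γ r R s τ p q ρ z‖ ≤
      sectionBound ψ γ r R τ := by
  have hbound := norm_integral_oscIntegrand_line_le (p := p) (q := q) (s := s) (c := ρ) (α := 0)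
    (P := ρ) hψ hγ hr (by linarith) hτ (hr.le.trans (le_max_right (ρ / 2) r))
    (max_le (by linarith) (by linarith) : max (ρ / 2) r ≤ 2 * R) le_rfl
    (fun _ _ => by simpa using hρ)
    fun z hz => curvatureConst_le_phaseLineDeriv₂_vertical hγ hs hr.le hr1 hR hρ
      (by linarith [(le_max_left (ρ / 2) r).trans hz.1]) ((le_max_right (ρ / 2) r).trans hz.1) hz.2
  simpa using hbound

lemma norm_integral_oscIntegrand_diagonal_le (hψ : IsC1Cutoff ψ) (hγ : 0 < γ) (hs : -1 ≤ s)
    (hr : 0 < r) (hr1 : r ≤ 1) (hR : 1 ≤ R) (hτ : 0 < τ) {w : ℝ} (hrw : r ≤ w) (hwR : w ≤ 2 * R) :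
    ‖∫ u in r..w, oscIntegrand ψ γ r R s τ p q (w + u) u‖ ≤ sectionBound ψ γ r R τ := by
  have hbound := norm_integral_oscIntegrand_line_le (p := p) (q := q) (s := s) (c := w) (α := 1)
    (P := 4 * R) hψ hγ hr (by linarith) hτ hr.le hrw zero_le_one
    (fun u hu => ⟨by linarith [hu.1], by linarith [hu.2]⟩)
    fun u hu => curvatureConst_le_phaseLineDeriv₂_diagonal hγ hs hr hr1 hR hu.1 hu.2 hwR
  simpa using hbound

end Sections

/-! ### Integrals over the quadrant by vertical and diagonal sections -/

section SectionIntegrals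

variable {E : Type*} [NormedAddCommGroup E] [NormedSpace ℝ E]

lemma norm_integral_prod_le_of_norm_section_le {α β : Type*} [MeasurableSpace α]
    [MeasurableSpace β] {μ : Measure α} {ν : Measure β} [SFinite μ] [SFinite ν] {G : α × β → E}
    {s : Set α} {Q : ℝ} (hG : Integrable G (μ.prod ν)) (hs : μ s < ∞)
    (hzero : ∀ x ∉ s, ∫ y, G (x, y) ∂ν = 0) (hQ : ∀ x ∈ s, ‖∫ y, G (x, y) ∂ν‖ ≤ Q) :
    ‖∫ x, G x ∂μ.prod ν‖ ≤ Q * μ.real s := by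
  rw [integral_prod G hG, ← setIntegral_eq_integral_of_forall_compl_eq_zero hzero]
  exact norm_setIntegral_le_of_norm_le_const hs hQ

variable {G : ℝ × ℝ → E} {a b Q : ℝ}

lemma norm_setIntegral_le_of_vertical (hG : Integrable G) (ha : 0 ≤ a) (hab : a ≤ b)
    (hsupp : ∀ x ∉ Set.Ioo a b ×ˢ Set.Ioo a b, G x = 0)
    (hQ : ∀ ρ ∈ Set.Ioo a b, ‖∫ z in max (ρ / 2) a..b, G (ρ, z)‖ ≤ Q) :
    ‖∫ x in {x | x.1 < 2 * x.2}, G x‖ ≤ Q * (b - a) := by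
  have hmeas : MeasurableSet {x : ℝ × ℝ | x.1 < 2 * x.2} :=
    measurableSet_lt measurable_fst (measurable_snd.const_mul 2)
  have hzero : ∀ ρ ∉ Set.Ioo a b, ∀ z, {x : ℝ × ℝ | x.1 < 2 * x.2}.indicator G (ρ, z) = 0 :=
    fun ρ hρ z => Set.indicator_apply_eq_zero.2 fun _ => hsupp _ fun h => hρ h.1
  rw [← integral_indicator hmeas, ← Real.volume_real_Ioo_of_le hab]
  refine norm_integral_prod_le_of_norm_section_le (hG.indicator hmeas) measure_Ioo_lt_top
    (fun ρ hρ => by simp [hzero ρ hρ]) fun ρ hρ => ?_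
  convert hQ ρ hρ using 2
  rw [intervalIntegral.integral_of_le (max_le (by linarith [hρ.1, hρ.2]) hab),
    ← integral_indicator measurableSet_Ioc]
  congr 1 with z
  simp only [Set.indicator, Set.mem_ofPred_eq, Set.mem_Ioc, max_lt_iff]
  split_ifs with hlt hmem hmem
  · rfl
  · exact hsupp _ fun h => hmem ⟨⟨by linarith, h.2.1⟩, h.2.2.le⟩
  · exact absurd hmem.1.1 (by linarith)
  · rfl

lemma measurePreserving_diagonalShear :
    MeasurePreserving (fun x : ℝ × ℝ => (x.1 + x.2, x.2)) volume volume := by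
  simpa [Function.comp_def, add_comm, Measure.volume_eq_prod] using
    Measure.measurePreserving_swap.comp
      (measurePreserving_prod_add_swap (volume : Measure ℝ) volume)

lemma norm_setIntegral_le_of_diagonal (hG : Integrable G) (ha : 0 ≤ a) (hab : a ≤ b)
    (hsupp : ∀ x ∉ Set.Ioo a b ×ˢ Set.Ioo a b, G x = 0)
    (hQ : ∀ w ∈ Set.Ioo a b, ‖∫ u in a..w, G (w + u, u)‖ ≤ Q) :
    ‖∫ x in {x | x.1 < 2 * x.2}ᶜ, G x‖ ≤ Q * (b - a) := by
  have hmeas : MeasurableSet {x : ℝ × ℝ | x.1 < 2 * x.2}ᶜ :=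
    (measurableSet_lt measurable_fst (measurable_snd.const_mul 2)).compl
  set G' := {x : ℝ × ℝ | x.1 < 2 * x.2}ᶜ.indicator G with hG'
  have hint : Integrable G' := hG.indicator hmeas
  have hshear : ∫ x, G' x = ∫ x : ℝ × ℝ, G' (x.1 + x.2, x.2) := by
    conv_lhs => rw [← measurePreserving_diagonalShear.map_eq]
    refine integral_map measurePreserving_diagonalShear.aemeasurable ?_
    rw [measurePreserving_diagonalShear.map_eq]
    exact hint.aestronglyMeasurable
  have hsection : ∀ w u, G' (w + u, u) = (Set.Ioc a w).indicator (fun u => G (w + u, u)) u := by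
    intro w u
    simp only [hG', Set.indicator, Set.mem_compl_iff, Set.mem_ofPred_eq, Set.mem_Ioc, not_lt]
    split_ifs with hle hmem hmem
    · rfl
    · exact hsupp _ fun h => hmem ⟨h.2.1, by linarith⟩
    · exact absurd hmem.2 (by linarith)
    · rfl
  rw [← integral_indicator hmeas, hshear, ← Real.volume_real_Ioo_of_le hab]
  refine norm_integral_prod_le_of_norm_section_le
    (measurePreserving_diagonalShear.integrable_comp_of_integrable hint) measure_Ioo_lt_top
    (fun w hw => ?_) fun w hw => ?_
  · simp only [hsection]
    refine integral_eq_zero_of_ae (Eventually.of_forall fun u => ?_)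
    refine Set.indicator_apply_eq_zero.2 fun hu => hsupp _ fun h => hw ?_
    exact ⟨hu.1.trans_le hu.2, by linarith [hu.1, h.1.2]⟩
  · simp only [hsection]
    rw [integral_indicator measurableSet_Ioc, ← intervalIntegral.integral_of_le hw.1.le]
    exact hQ w hw

theorem norm_integral_le_of_vertical_of_diagonal (hG : Integrable G) (ha : 0 ≤ a) (hab : a ≤ b)
    (hsupp : ∀ x ∉ Set.Ioo a b ×ˢ Set.Ioo a b, G x = 0)
    (hvert : ∀ ρ ∈ Set.Ioo a b, ‖∫ z in max (ρ / 2) a..b, G (ρ, z)‖ ≤ Q)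
    (hdiag : ∀ w ∈ Set.Ioo a b, ‖∫ u in a..w, G (w + u, u)‖ ≤ Q) :
    ‖∫ x, G x‖ ≤ 2 * Q * (b - a) := by
  rw [← integral_add_compl (measurableSet_lt measurable_fst (measurable_snd.const_mul 2)) hG]
  calc _ ≤ Q * (b - a) + Q * (b - a) := norm_add_le_of_le
        (norm_setIntegral_le_of_vertical hG ha hab hsupp hvert)
        (norm_setIntegral_le_of_diagonal hG ha hab hsupp hdiag)
    _ = 2 * Q * (b - a) := by ring

end SectionIntegrals

section Quadrant

variable {ψ : ℝ → ℝ} {γ r R s τ p q : ℝ}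

lemma IsC1Cutoff.one_sub_div_eq_zero (hψ : IsC1Cutoff ψ) (hr : 0 < r) {x : ℝ} (hx : x ≤ r) :
    1 - ψ (x / r) = 0 := by
  rw [hψ.eq_one _ ((div_le_one hr).2 hx), sub_self]

lemma amplitude_eq_zero (hψ : IsC1Cutoff ψ) (hr : 0 < r) (hR : 0 < R) {ρ z : ℝ}
    (h : (ρ, z) ∉ Set.Ioo r (2 * R) ×ˢ Set.Ioo r (2 * R)) : amplitude ψ r R ρ z = 0 := by
  by_cases hρ : ρ ≤ r
  · simp [amplitude, hψ.one_sub_div_eq_zero hr hρ]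
  by_cases hz : z ≤ r
  · simp [amplitude, hψ.one_sub_div_eq_zero hr hz]
  have hfar : 2 * R ≤ planarNorm ρ z := by
    simp only [Set.mem_prod, Set.mem_Ioo, not_and_or, not_lt, hρ, hz, false_or] at h
    rcases h with h | h
    · exact h.trans (Real.le_sqrt_of_sq_le (by nlinarith))
    · exact h.trans (Real.le_sqrt_of_sq_le (by nlinarith))
  simp [amplitude, hψ.eq_zero _ ((le_div_iff₀ hR).2 hfar)]

lemma oscIntegrand_eq_zero (hψ : IsC1Cutoff ψ) (hr : 0 < r) (hR : 0 < R) {ρ z : ℝ}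
    (h : (ρ, z) ∉ Set.Ioo r (2 * R) ×ˢ Set.Ioo r (2 * R)) :
    oscIntegrand ψ γ r R s τ p q ρ z = 0 := by
  rw [oscIntegrand, amplitude_eq_zero hψ hr hR h, zero_smul]

lemma integrable_oscIntegrand (hψ : IsC1Cutoff ψ) (hr : 0 < r) (hR : 0 < R) :
    Integrable fun x : ℝ × ℝ => oscIntegrand ψ γ r R s τ p q x.1 x.2 := by
  have hψc := hψ.continuous
  have hcont : Continuous fun x : ℝ × ℝ => oscIntegrand ψ γ r R s τ p q x.1 x.2 := by
    unfold oscIntegrand amplitude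
    fun_prop
  have hsubset : Set.Ioo r (2 * R) ×ˢ Set.Ioo r (2 * R) ⊆
      Set.Icc r (2 * R) ×ˢ Set.Icc r (2 * R) :=
    Set.prod_mono Set.Ioo_subset_Icc_self Set.Ioo_subset_Icc_self
  exact hcont.integrable_of_hasCompactSupport <|
    HasCompactSupport.intro (isCompact_Icc.prod isCompact_Icc) fun x hx =>
      oscIntegrand_eq_zero hψ hr hR fun h => hx (hsubset h)

lemma oscIntegrand_neg (ψ : ℝ → ℝ) (γ r R s τ p q ρ z : ℝ) :
    oscIntegrand ψ γ r R s (-τ) (-p) (-q) ρ z =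
      starRingEnd ℂ (oscIntegrand ψ γ r R s τ p q ρ z) := by
  simp only [oscIntegrand, Complex.real_smul, map_mul, Complex.conj_ofReal, ← Complex.exp_conj,
    Complex.conj_I]
  congr 2
  push_cast
  ring

lemma norm_integral_oscIntegrand_le_of_pos (hψ : IsC1Cutoff ψ) (hγ : 0 < γ) (hs : -1 ≤ s)
    (hr : 0 < r) (hr1 : r ≤ 1) (hR : 1 ≤ R) (hτ : 0 < τ) :
    ‖∫ x : ℝ × ℝ, oscIntegrand ψ γ r R s τ p q x.1 x.2‖ ≤ 4 * R * sectionBound ψ γ r R τ := by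
  have hR0 : 0 < R := by linarith
  have hQ := sectionBound_nonneg ψ γ r R τ
  calc _ ≤ 2 * sectionBound ψ γ r R τ * (2 * R - r) :=
        norm_integral_le_of_vertical_of_diagonal (integrable_oscIntegrand hψ hr hR0) hr.le
          (by linarith) (fun x hx => oscIntegrand_eq_zero hψ hr hR0 hx)
          (fun ρ hρ => norm_integral_oscIntegrand_vertical_le hψ hγ hs hr hr1 hR hτ
            (hr.trans hρ.1) hρ.2.le)
          fun w hw => norm_integral_oscIntegrand_diagonal_le hψ hγ hs hr hr1 hR hτ hw.1.le hw.2.le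
    _ ≤ 2 * sectionBound ψ γ r R τ * (2 * R) := by gcongr; linarith
    _ = 4 * R * sectionBound ψ γ r R τ := by ring

theorem norm_integral_oscIntegrand_le (hψ : IsC1Cutoff ψ) (hγ : 0 < γ) (hs : -1 ≤ s)
    (hr : 0 < r) (hr1 : r ≤ 1) (hR : 1 ≤ R) (hτ : τ ≠ 0) :
    ‖∫ x : ℝ × ℝ, oscIntegrand ψ γ r R s τ p q x.1 x.2‖ ≤ 4 * R * sectionBound ψ γ r R |τ| := by
  rcases hτ.lt_or_gt with hneg | hpos
  · rw [abs_of_neg hneg, ← RCLike.norm_conj, ← integral_conj]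
    simp only [← oscIntegrand_neg]
    exact norm_integral_oscIntegrand_le_of_pos hψ hγ hs hr hr1 hR (neg_pos.2 hneg)
  · rw [abs_of_pos hpos]
    exact norm_integral_oscIntegrand_le_of_pos hψ hγ hs hr hr1 hR hpos

end Quadrant

/-! ### Cylindrical coordinates -/

section Cylindrical

variable {E : Type*} [NormedAddCommGroup E] [NormedSpace ℝ E]

lemma integrableOn_smul_comp_polarCoord_symm {H : ℝ × ℝ → E} (hH : Integrable H) :
    IntegrableOn (fun p : ℝ × ℝ => p.1 • H (polarCoord.symm p)) polarCoord.target := by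
  have himage := (integrableOn_image_iff_integrableOn_abs_det_fderiv_smul volume
    polarCoord.open_target.measurableSet
    (fun p _ => (hasFDerivAt_polarCoord_symm p).hasFDerivWithinAt) polarCoord.symm.injOn H).1
    hH.integrableOn
  refine himage.congr_fun (fun p hp => ?_) polarCoord.open_target.measurableSet
  simp only [det_fderivPolarCoordSymm, abs_of_pos (show 0 < p.1 from hp.1)]

lemma norm_integral_le_of_ray {H : ℝ × ℝ → E} {Q : ℝ} (hH : Integrable H)
    (hQ : ∀ θ, ‖∫ ρ in Set.Ioi 0, ρ • H (ρ * Real.cos θ, ρ * Real.sin θ)‖ ≤ Q) :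
    ‖∫ x, H x‖ ≤ Q * (2 * π) := by
  have hint := integrableOn_smul_comp_polarCoord_symm hH
  rw [← integral_comp_polarCoord_symm H]
  rw [polarCoord_target, IntegrableOn, Measure.volume_eq_prod, ← Measure.prod_restrict] at *
  rw [integral_prod_symm _ hint]
  refine (norm_setIntegral_le_of_norm_le_const measure_Ioo_lt_top fun θ _ => hQ θ).trans_eq ?_
  rw [Real.volume_real_Ioo_of_le (by linarith [Real.pi_pos])]
  ring

lemma norm_integral_le_of_halfPlane {F : E3 → E} {Q : ℝ} (hF : Integrable F)
    (hQ : ∀ θ, ‖∫ ρ in Set.Ioi 0, ∫ z, ρ • F (pt (ρ * Real.cos θ) (ρ * Real.sin θ) z)‖ ≤ Q) :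
    ‖∫ ξ, F ξ‖ ≤ Q * (2 * π) := by
  let e : E3 ≃ᵐ ℝ × (ℝ × ℝ) :=
    ((MeasurableEquiv.toLp 2 (Fin 3 → ℝ)).symm.trans
      (MeasurableEquiv.piFinSuccAbove (fun _ => ℝ) 2)).trans
      ((MeasurableEquiv.refl ℝ).prodCongr MeasurableEquiv.finTwoArrow)
  have he : MeasurePreserving e volume (volume.prod volume) :=
    ((MeasurePreserving.id (volume : Measure ℝ)).prod (volume_preserving_finTwoArrow ℝ)).comp
      ((volume_preserving_piFinSuccAbove (fun _ : Fin 3 => ℝ) 2).comp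
        (EuclideanSpace.volume_preserving_symm_measurableEquiv_toLp (Fin 3)))
  have he_symm : ∀ x, e.symm x = pt x.2.1 x.2.2 x.1 := fun x => e.symm_apply_eq.2 rfl
  have hint : Integrable (F ∘ e.symm) (volume.prod volume) :=
    he.symm.integrable_comp_of_integrable hF
  have hswap : ∫ ξ, F ξ = ∫ x : ℝ × ℝ, ∫ z, F (pt x.1 x.2 z) := by
    rw [← he.symm.integral_comp e.symm.measurableEmbedding]
    exact (integral_prod_symm _ hint).trans (by simp only [Function.comp_apply, he_symm])
  rw [hswap]
  refine norm_integral_le_of_ray (by simpa [he_symm] using hint.integral_prod_right) fun θ => ?_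
  simpa only [integral_smul] using hQ θ

lemma integral_integral_add_comp_neg {A B : ℝ × ℝ → E} (hA : Integrable A) (hB : Integrable B) :
    ∫ ρ, ∫ z, (A (ρ, z) + B (ρ, -z)) = (∫ x, A x) + ∫ x, B x := by
  have hB' : Integrable (fun x : ℝ × ℝ => B (x.1, -x.2)) :=
    ((MeasurePreserving.id (volume : Measure ℝ)).prod
      (Measure.measurePreserving_neg volume)).integrable_comp_of_integrable hB
  rw [Measure.volume_eq_prod] at *
  rw [← integral_prod (fun x => A x + B (x.1, -x.2)) (hA.add hB'), integral_add hA hB',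
    integral_prod _ hB', integral_prod _ hB]
  congr! 3 with ρ
  exact integral_neg_eq_self (fun z => B (ρ, z)) volume

end Cylindrical

/-! ### Fourier multipliers with bounded kernel -/

section Multiplier

variable {V : Type*} [NormedAddCommGroup V] [InnerProductSpace ℝ V] [FiniteDimensional ℝ V]
  [MeasurableSpace V] [BorelSpace V]

open FourierTransform

lemma integrable_cexp_inner_mul {m : V → ℂ} (hm : Integrable m) (x : V) :
    Integrable fun ξ => cexp (((2 * π * inner ℝ ξ x : ℝ) : ℂ) * I) * m ξ :=
  hm.bdd_mul (c := 1) (Continuous.aestronglyMeasurable (by fun_prop))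
    (.of_forall fun ξ => by rw [Complex.norm_exp_ofReal_mul_I])

lemma fourierInv_mul_fourier_eq_integral {m f : V → ℂ} (hm : Integrable m) (hf : Integrable f)
    (x : V) : 𝓕⁻ (fun ξ => m ξ * 𝓕 f ξ) x = ∫ y, f y * 𝓕⁻ m (x - y) := by
  have hflip := VectorFourier.integral_fourierIntegral_smul_eq_flip (L := innerₗ V)
    Real.continuous_fourierChar continuous_inner hf (integrable_cexp_inner_mul hm x)
  have htranslate : ∀ y, 𝓕⁻ m (x - y) =
      𝓕 (fun ξ => cexp (((2 * π * inner ℝ ξ x : ℝ) : ℂ) * I) * m ξ) y := fun y => by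
    simp only [Real.fourierInv_eq', Real.fourier_eq', smul_eq_mul, ← mul_assoc,
      ← Complex.exp_add, inner_sub_right]
    congr! 4 with ξ
    push_cast
    ring
  simp only [htranslate, Real.fourierInv_eq', smul_eq_mul]
  calc _ = ∫ ξ, 𝓕 f ξ * (cexp (((2 * π * inner ℝ ξ x : ℝ) : ℂ) * I) * m ξ) := by
        congr! 2 with ξ
        ring
    _ = _ := by simpa using! hflip

theorem norm_fourierInv_mul_fourier_le {m f : V → ℂ} {B : ℝ} (hm : Integrable m)
    (hf : Integrable f) (hB : ∀ y, ‖𝓕⁻ m y‖ ≤ B) (x : V) :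
    ‖𝓕⁻ (fun ξ => m ξ * 𝓕 f ξ) x‖ ≤ B * ∫ y, ‖f y‖ := by
  rw [fourierInv_mul_fourier_eq_integral hm hf, ← integral_const_mul]
  refine norm_integral_le_of_norm_le (hf.norm.const_mul _) (.of_forall fun y => ?_)
  rw [norm_mul, mul_comm]
  gcongr
  exact hB _

end Multiplier

/-! ### The kernel of the propagator -/

section Kernel

variable {ψ : ℝ → ℝ} {γ r R τ ε1 ε2 : ℝ}

/-- The Fourier multiplier `Ψ_{r,R}(ξ) e^{τ λ(ξ)}` of the operator `Ψ_{r,R}(D) G_λ(t)`, with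
`τ = t / ε`. -/
def propagatorMultiplier (ψ : ℝ → ℝ) (r R γ ε1 ε2 τ : ℝ) (ξ : E3) : ℂ :=
  (Psi ψ r R ξ : ℂ) * cexp (τ * lamEV γ ε1 ε2 ξ)

lemma integrable_propagatorMultiplier (hψ : IsC1Cutoff ψ) (hR : 0 < R) :
    Integrable (propagatorMultiplier ψ r R γ ε1 ε2 τ) := by
  have hψc := hψ.continuous
  have hcont : Continuous (propagatorMultiplier ψ r R γ ε1 ε2 τ) := by
    unfold propagatorMultiplier Psi lamEV xih
    fun_prop
  refine hcont.integrable_of_hasCompactSupport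
    (HasCompactSupport.intro (isCompact_closedBall 0 (2 * R)) fun ξ hξ => ?_)
  rw [mem_closedBall_zero_iff, not_le] at hξ
  simp [propagatorMultiplier, Psi, hψ.eq_zero _ ((le_div_iff₀ hR).2 hξ.le)]

lemma norm_pt_cylindrical (ρ θ z : ℝ) :
    ‖pt (ρ * Real.cos θ) (ρ * Real.sin θ) z‖ = planarNorm ρ z := by
  rw [EuclideanSpace.norm_eq, Fin.sum_univ_three, planarNorm]
  congr 1
  simp only [pt, EuclideanSpace.equiv, PiLp.coe_symm_continuousLinearEquiv, Matrix.cons_val,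
    Real.norm_eq_abs, sq_abs]
  linear_combination ρ ^ 2 * Real.sin_sq_add_cos_sq θ

lemma xih_pt_cylindrical {ρ : ℝ} (hρ : 0 ≤ ρ) (θ z : ℝ) :
    xih (pt (ρ * Real.cos θ) (ρ * Real.sin θ) z) = ρ := by
  rw [xih, ← Real.sqrt_sq hρ]
  congr 1
  simp only [pt, EuclideanSpace.equiv, PiLp.coe_symm_continuousLinearEquiv, Matrix.cons_val,
    Real.sqrt_sq hρ]
  linear_combination ρ ^ 2 * Real.sin_sq_add_cos_sq θ

lemma inner_pt (x y z : ℝ) (v : E3) : inner ℝ (pt x y z) v = x * v 0 + y * v 1 + z * v 2 := by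
  rw [PiLp.inner_apply, Fin.sum_univ_three]
  simp only [pt, EuclideanSpace.equiv, PiLp.coe_symm_continuousLinearEquiv, Matrix.cons_val,
    RCLike.inner_apply, conj_trivial]
  ring

lemma focalDist_eq_sqrt (γ ρ z : ℝ) :
    focalDist γ ρ z = √(1 + γ ^ 2 * planarNorm ρ z ^ 2 + 2 * γ * z) := by
  rw [focalDist, planarNorm_sq, planarNorm]
  congr 1
  ring

lemma phase_neg (hε2 : ε2 = 1 ∨ ε2 = -1) (γ ρ z : ℝ) :
    phase γ ε2 ρ (-z) = ε2 * phase γ ε2 ρ z := by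
  rcases hε2 with rfl | rfl <;> simp only [phase, neg_neg] <;> ring

lemma lamEV_pt_cylindrical (γ ε1 ε2 ρ θ z : ℝ) :
    lamEV γ ε1 ε2 (pt (ρ * Real.cos θ) (ρ * Real.sin θ) z) =
      I * ((ε1 * phase γ ε2 ρ (-z) : ℝ) : ℂ) := by
  have hneg : focalDist γ ρ (-z) = √(1 + γ ^ 2 * planarNorm ρ z ^ 2 - 2 * γ * z) := by
    rw [focalDist_eq_sqrt, planarNorm, planarNorm, neg_sq, mul_neg, ← sub_eq_add_neg]
  have hthird : pt (ρ * Real.cos θ) (ρ * Real.sin θ) z 2 = z := rfl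
  rw [lamEV, norm_pt_cylindrical, hthird, phase, neg_neg, hneg, focalDist_eq_sqrt]
  push_cast
  ring

lemma IsC1Cutoff.one_sub_abs_div (hψ : IsC1Cutoff ψ) (hr : 0 < r) (z : ℝ) :
    1 - ψ (|z| / r) = (1 - ψ (z / r)) + (1 - ψ (-z / r)) := by
  rcases le_total 0 z with hz | hz
  · rw [abs_of_nonneg hz, hψ.one_sub_div_eq_zero hr (show -z ≤ r by linarith), add_zero]
  · rw [abs_of_nonpos hz, hψ.one_sub_div_eq_zero hr (hz.trans hr.le), zero_add]

lemma mul_Psi_pt_cylindrical (hψ : IsC1Cutoff ψ) (hr : 0 < r) {ρ : ℝ} (hρ : 0 ≤ ρ) (θ z : ℝ) :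
    ρ * Psi ψ r R (pt (ρ * Real.cos θ) (ρ * Real.sin θ) z) =
      amplitude ψ r R ρ z + amplitude ψ r R ρ (-z) := by
  have hthird : pt (ρ * Real.cos θ) (ρ * Real.sin θ) z 2 = z := rfl
  have heven : planarNorm ρ (-z) = planarNorm ρ z := by rw [planarNorm, planarNorm, neg_sq]
  rw [Psi, norm_pt_cylindrical, xih_pt_cylindrical hρ, hthird, hψ.one_sub_abs_div hr, amplitude,
    amplitude, heven]
  ring

lemma smul_cexp_mul_propagatorMultiplier_pt (hψ : IsC1Cutoff ψ) (hr : 0 < r)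
    (hε2 : ε2 = 1 ∨ ε2 = -1) (x : E3) {ρ : ℝ} (hρ : 0 ≤ ρ) (θ z : ℝ) :
    letI ξ := pt (ρ * Real.cos θ) (ρ * Real.sin θ) z
    letI p := 2 * π * (Real.cos θ * x 0 + Real.sin θ * x 1)
    ρ • (cexp (((2 * π * inner ℝ ξ x : ℝ) : ℂ) * I) * propagatorMultiplier ψ r R γ ε1 ε2 τ ξ) =
      oscIntegrand ψ γ r R ε2 (τ * ε1 * ε2) p (2 * π * x 2) ρ z +
        oscIntegrand ψ γ r R ε2 (τ * ε1) p (-(2 * π * x 2)) ρ (-z) := by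
  have hPsi := congrArg (fun a : ℝ => (a : ℂ)) (mul_Psi_pt_cylindrical (R := R) hψ hr hρ θ z)
  have hphase := phase_neg hε2 γ ρ z
  simp only [oscIntegrand, propagatorMultiplier, lamEV_pt_cylindrical, inner_pt,
    Complex.real_smul]
  rw [hphase]
  push_cast at hPsi ⊢
  rw [mul_left_comm (cexp _), ← mul_assoc (ρ : ℂ), hPsi, ← Complex.exp_add, add_mul]
  congr 3 <;> ring

lemma integral_halfPlane_propagatorMultiplier (hψ : IsC1Cutoff ψ) (hr : 0 < r) (hR : 0 < R)
    (hε2 : ε2 = 1 ∨ ε2 = -1) (x : E3) (θ : ℝ) :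
    letI p := 2 * π * (Real.cos θ * x 0 + Real.sin θ * x 1)
    letI q := 2 * π * x 2
    ∫ ρ in Set.Ioi 0, ∫ z, ρ •
        (cexp (((2 * π * inner ℝ (pt (ρ * Real.cos θ) (ρ * Real.sin θ) z) x : ℝ) : ℂ) * I) *
          propagatorMultiplier ψ r R γ ε1 ε2 τ (pt (ρ * Real.cos θ) (ρ * Real.sin θ) z)) =
      (∫ y : ℝ × ℝ, oscIntegrand ψ γ r R ε2 (τ * ε1 * ε2) p q y.1 y.2) +
        ∫ y : ℝ × ℝ, oscIntegrand ψ γ r R ε2 (τ * ε1) p (-q) y.1 y.2 := by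
  refine .trans ?_ ((setIntegral_eq_integral_of_forall_compl_eq_zero (s := Set.Ioi (0 : ℝ))
    fun ρ hρ => ?_).trans (integral_integral_add_comp_neg (integrable_oscIntegrand hψ hr hR)
      (integrable_oscIntegrand hψ hr hR)))
  · refine setIntegral_congr_fun measurableSet_Ioi fun ρ hρ => ?_
    simp only [smul_cexp_mul_propagatorMultiplier_pt hψ hr hε2 x (le_of_lt hρ) θ]
  · have hzero : ∀ z, (ρ, z) ∉ Set.Ioo r (2 * R) ×ˢ Set.Ioo r (2 * R) :=
      fun z hz => hρ (hr.trans hz.1.1)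
    simp only [oscIntegrand_eq_zero hψ hr hR (hzero _), add_zero, integral_zero]

theorem norm_fourierInv_propagatorMultiplier_le (hψ : IsC1Cutoff ψ) (hγ : 0 < γ)
    (hε1 : ε1 = 1 ∨ ε1 = -1) (hε2 : ε2 = 1 ∨ ε2 = -1) (hr : 0 < r) (hr1 : r ≤ 1) (hR : 1 ≤ R)
    (hτ : 0 < τ) (x : E3) :
    ‖FTinv (propagatorMultiplier ψ r R γ ε1 ε2 τ) x‖ ≤
      16 * π * R * sectionBound ψ γ r R τ := by
  have hR0 : 0 < R := by linarith
  have hs : -1 ≤ ε2 := by rcases hε2 with rfl | rfl <;> norm_num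
  have habs1 : |τ * ε1| = τ := by rcases hε1 with rfl | rfl <;> simp [abs_of_pos hτ]
  have habs2 : |τ * ε1 * ε2| = τ := by rcases hε2 with rfl | rfl <;> simp [habs1]
  have hne1 : τ * ε1 ≠ 0 := abs_pos.1 (hτ.trans_eq habs1.symm)
  have hne2 : τ * ε1 * ε2 ≠ 0 := abs_pos.1 (hτ.trans_eq habs2.symm)
  rw [FTinv, Real.fourierInv_eq']
  simp only [smul_eq_mul]
  refine (norm_integral_le_of_halfPlane (Q := 8 * R * sectionBound ψ γ r R τ)
    (integrable_cexp_inner_mul (integrable_propagatorMultiplier hψ hR0) x)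
    fun θ => ?_).trans_eq (by ring)
  rw [integral_halfPlane_propagatorMultiplier hψ hr hR0 hε2]
  refine (norm_add_le _ _).trans ((add_le_add
    (norm_integral_oscIntegrand_le hψ hγ hs hr hr1 hR hne2)
    (norm_integral_oscIntegrand_le hψ hγ hs hr hr1 hR hne1)).trans_eq ?_)
  rw [habs1, habs2]
  ring

end Kernel

/-! ### The dispersive estimate -/

/-- The constant of the dispersive estimate. -/
def dispersiveConst (ψ : ℝ → ℝ) (γ : ℝ) : ℝ :=
  128 * π * (3 * (∫ x, |deriv ψ x|) + 2) / √(curvatureConst γ ^ 5)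

lemma dispersiveConst_pos (ψ : ℝ → ℝ) {γ : ℝ} (hγ : 0 < γ) : 0 < dispersiveConst ψ γ := by
  have : 0 ≤ ∫ x, |deriv ψ x| := integral_nonneg fun _ => abs_nonneg _
  have := curvatureConst_pos hγ
  unfold dispersiveConst
  positivity

lemma mul_sectionBound_div (ψ : ℝ → ℝ) {γ : ℝ} (hγ : 0 < γ) (r R ε t : ℝ) :
    16 * π * R * sectionBound ψ γ r R (t / ε) =
      dispersiveConst ψ γ * R ^ 3 * √(ε / (r * t)) := by
  have hκ := (pow_pos (curvatureConst_pos hγ) 5).le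
  have hrate : ε / (r * t) = (t / ε * r)⁻¹ := by
    rw [mul_comm r, div_mul_eq_mul_div, inv_div]
  rw [sectionBound, dispersiveConst, mul_assoc (curvatureConst γ ^ 5), Real.sqrt_mul hκ, hrate,
    Real.sqrt_inv]
  ring

theorem norm_PsiG_le {ψ : ℝ → ℝ} {γ r R ε ε1 ε2 t : ℝ} (hψ : IsC1Cutoff ψ) (hγ : 0 < γ)
    (hr : 0 < r) (hr1 : r ≤ 1) (hR : 1 ≤ R) (hε : 0 < ε) (hε1 : ε1 = 1 ∨ ε1 = -1)
    (hε2 : ε2 = 1 ∨ ε2 = -1) (ht : 0 < t) {f : E3 → ℂ} (hf : Integrable f) (x : E3) :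
    ‖PsiG ψ r R γ ε1 ε2 ε t f x‖ ≤
      dispersiveConst ψ γ * R ^ 3 * √(ε / (r * t)) * ∫ y, ‖f y‖ := by
  rw [← mul_sectionBound_div ψ hγ]
  exact norm_fourierInv_mul_fourier_le (integrable_propagatorMultiplier hψ (by linarith)) hf
    (norm_fourierInv_propagatorMultiplier_le hψ hγ hε1 hε2 hr hr1 hR (div_pos ht hε)) x

lemma sqrt_div_mul_le_rpow_mul_rpow {r : ℝ} (hr : 0 < r) (hr1 : r ≤ 1) (ε t : ℝ) :
    √(ε / (r * t)) ≤ r ^ (-(2 : ℝ)) * (ε / t) ^ ((1 : ℝ) / 2) := by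
  have hrate : √(ε / (r * t)) = (√r)⁻¹ * √(ε / t) := by
    rw [← Real.sqrt_inv, ← Real.sqrt_mul (by positivity)]
    congr 1
    ring
  have hrsq : r ^ 2 ≤ √r :=
    Real.le_sqrt_of_sq_le (by nlinarith [pow_le_one₀ hr.le hr1 (n := 3), pow_pos hr 3])
  rw [hrate, ← Real.sqrt_eq_rpow, Real.rpow_neg hr.le, Real.rpow_two]
  gcongr

theorem dispersive_Linfty_general (γ : ℝ) (hγ : 0 < γ) (ψ : ℝ → ℝ) (hψ : IsC1Cutoff ψ) :
    ∃ C : ℝ, 0 < C ∧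
      ∀ r R ε : ℝ, 0 < r → r ≤ 1 → 1 ≤ R → 0 < ε →
      ∀ ε1 ε2 : ℝ, (ε1 = 1 ∨ ε1 = -1) → (ε2 = 1 ∨ ε2 = -1) →
      ∀ t : ℝ, 0 < t →
      ∀ f : E3 → ℂ, Integrable f volume →
        eLpNorm (PsiG ψ r R γ ε1 ε2 ε t f) ⊤ volume ≤
          ENNReal.ofReal (C * R ^ 3 * √(ε / (r * t)) * (∫ x : E3, ‖f x‖)) := by
  refine ⟨dispersiveConst ψ γ, dispersiveConst_pos ψ hγ, ?_⟩
  intro r R ε hr hr1 hR hε ε1 ε2 hε1 hε2 t ht f hf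
  rw [eLpNorm_exponent_top]
  exact eLpNormEssSup_le_of_ae_bound
    (.of_forall fun x => norm_PsiG_le hψ hγ hr hr1 hR hε hε1 hε2 ht hf x)

/-- For `0 < r ≤ 1 ≤ R`, `ε > 0`, each phase `λ`, every `t > 0` and
every `f ∈ L¹(ℝ³)`: `‖Ψ_{r,R}(D)G_λ(t)f‖_{L^∞} ≤ C R³ r^{−2} (ε/t)^{1/2} ‖f‖_{L¹}`,
with `C` depending only on `γ̄` and `ψ`. -/
theorem dispersive_Linfty (γ : ℝ) (hγ : 0 < γ) (ψ : ℝ → ℝ) (hψ : IsCutoff ψ) :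
    ∃ C : ℝ, 0 < C ∧
      ∀ r R ε : ℝ, 0 < r → r ≤ 1 → 1 ≤ R → 0 < ε →
      ∀ ε1 ε2 : ℝ, (ε1 = 1 ∨ ε1 = -1) → (ε2 = 1 ∨ ε2 = -1) →
      ∀ t : ℝ, 0 < t →
      ∀ f : E3 → ℂ, Integrable f volume →
        eLpNorm (PsiG ψ r R γ ε1 ε2 ε t f) ⊤ volume ≤
          ENNReal.ofReal (C * R ^ 3 * r ^ (-(2:ℝ)) * (ε / t) ^ ((1:ℝ)/2) *
            (∫ x : E3, ‖f x‖)) := by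
  obtain ⟨C, hC, hbound⟩ := dispersive_Linfty_general γ hγ ψ hψ.isC1Cutoff
  refine ⟨C, hC, fun r R ε hr hr1 hR hε ε1 ε2 hε1 hε2 t ht f hf =>
    (hbound r R ε hr hr1 hR hε ε1 ε2 hε1 hε2 t ht f hf).trans (ENNReal.ofReal_le_ofReal ?_)⟩
  rw [mul_assoc (C * R ^ 3) (r ^ _)]
  gcongr
  exact sqrt_div_mul_le_rpow_mul_rpow hr hr1 ε t
end
end
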